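/- arXiv:math/9912202 — 2 statements merged into one kernel-verified Lean document; each statement's English description precedes it below -/
import Mathlib

section
/- Let n ≥ 2 and let K ⊂ ℝⁿ be a fixed compact set. For δ ∈ (0,1] and locally integrable f : ℝⁿ → ℝ, define the Nikodym maximal function M^δ f(x) = sup over all line segments γ of length 1 containing x of (1/vol(T^δ_γ)) ∫_{T^δ_γ} |f(y)| dy, where T^δ_γ = {y ∈ ℝⁿ : dist(y, γ) ≤ δ}. Then for every p with 1 < p ≤ (n+1)/2, q = (n−1)p/(p−1), and every ε > 0 there is a constant C (depending only on n, p, ε, K) such that for all δ ∈ (0,1] and all measurable f supported in K: ‖M^δ f‖_{L^q(K)} ≤ C·δ^{1−n/p−ε}·‖f‖_{L^p(ℝⁿ)}. -/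
open MeasureTheory ENNReal

/-- The line segment of length `L` starting at `p` in the unit direction `e`. -/
def nikSeg {n : ℕ} (p e : EuclideanSpace ℝ (Fin n)) :
    Set (EuclideanSpace ℝ (Fin n)) :=
  (fun s : ℝ => p + s • e) '' Set.Icc 0 1

/-- The `δ`-tube around the unit segment determined by `p` and `e`. -/
def nikTube {n : ℕ} (δ : ℝ) (p e : EuclideanSpace ℝ (Fin n)) :
    Set (EuclideanSpace ℝ (Fin n)) :=
  {y | Metric.infDist y (nikSeg p e) ≤ δ}

/-- The Nikodym maximal function: the supremum, over all unit line segments `γ`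
containing `x`, of the average of `|f|` over the `δ`-tube around `γ`. -/
noncomputable def nikMax {n : ℕ} (δ : ℝ) (f : EuclideanSpace ℝ (Fin n) → ℝ)
    (x : EuclideanSpace ℝ (Fin n)) : ℝ≥0∞ :=
  ⨆ (p : EuclideanSpace ℝ (Fin n)) (e : EuclideanSpace ℝ (Fin n)) (_ : ‖e‖ = 1)
    (_ : x ∈ nikSeg p e),
    (∫⁻ y in nikTube δ p e, ENNReal.ofReal |f y|) / volume (nikTube δ p e)

/-!
The bush argument. Let `X` be a `δ`-separated set of points, each lying on a unit segment in whose
`δ`-tube `S` has density at least `t`. Averaging over `S` the number of these tubes through a point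
gives a point `c` in many of them. In dimension `m + 1` each tube loses at most half of its
intersection with `S` inside a ball about `c` of radius comparable to `t`. If two tubes through `c`
meet again outside that ball, the base point of one lies within `≲ δ / t` of the line of the other,
so a tube meets only few of the others there; hence many of the remaining parts of `S` are disjoint,
and their measures add up to at most `|S|`. This bounds the cardinality of `X`, which is a weak-type
estimate for the maximal function of `1_S`: `|{M 1_S > t}| ≲ |S|² / (δ ^ m * t ^ (m + 2))`.

For general `g`, normalised so that `∫ g ^ p ≤ 1`, the part of `g` above a fixed negative power of
`δ` has bounded maximal function by Chebyshev, and the rest splits into about `log (1 / δ)` dyadic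
level sets. Summing the weak-type estimates over these level sets, and then over the dyadic values
of the maximal function, costs only powers of the logarithm, which `δ ^ (-ε)` absorbs.
-/

section Measure

open Set

variable {α ι : Type*}

theorem exists_pairwiseDisjoint_card_mul_le {Y : Finset ι} {F : ι → Set α}
    (hne : ∀ x ∈ Y, (F x).Nonempty) {k N : ℝ} (hk : 0 ≤ k)
    (hN : ∀ z ∈ Y, ∀ W ⊆ Y, (∀ x ∈ W, (F x ∩ F z).Nonempty) → W.card * k ≤ N) :
    ∃ Z ⊆ Y, (Z : Set ι).PairwiseDisjoint F ∧ Y.card * k ≤ Z.card * N := by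
  classical
  obtain ⟨Z, hZY, hdisj, hZ⟩ := Vitali.exists_disjoint_subfamily_covering_enlargement F
    (Y : Set ι) 1 2 one_lt_two (fun _ _ ↦ zero_le_one) 1 (fun _ _ ↦ le_rfl) hne
  lift Z to Finset ι using Y.finite_toSet.subset hZY
  let touching (z : ι) : Finset ι := {x ∈ Y | (F x ∩ F z).Nonempty}
  have hsub : Y ⊆ Z.biUnion touching := by
    intro x hx
    obtain ⟨z, hz, hxz, -⟩ := hZ x hx
    exact Finset.mem_biUnion.2 ⟨z, hz, Finset.mem_filter.2 ⟨hx, hxz⟩⟩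
  refine ⟨Z, hZY, hdisj, ?_⟩
  calc Y.card * k ≤ (∑ z ∈ Z, (touching z).card : ℕ) * k := by
        gcongr
        exact (Finset.card_le_card hsub).trans Finset.card_biUnion_le
    _ = ∑ z ∈ Z, (touching z).card * k := by rw [Nat.cast_sum, Finset.sum_mul]
    _ ≤ Z.card * N := by
        rw [← nsmul_eq_mul]
        exact Finset.sum_le_card_nsmul _ _ _ fun z hz ↦
          hN z (hZY hz) _ (Y.filter_subset _) fun x hx ↦ (Finset.mem_filter.1 hx).2

variable [MeasurableSpace α] {μ : Measure α}

theorem exists_subset_common_mem_sum_measureReal_inter_le [Nonempty α] (X : Finset ι)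
    {T : ι → Set α} {S : Set α} (hT : ∀ i ∈ X, MeasurableSet (T i)) (hS : μ S ≠ ∞) :
    ∃ c, ∃ Y ⊆ X, (∀ i ∈ Y, c ∈ T i) ∧ ∑ i ∈ X, μ.real (S ∩ T i) ≤ Y.card * μ.real S := by
  classical
  rcases eq_or_ne (μ S) 0 with hS₀ | hS₀
  · refine ⟨Classical.arbitrary α, ∅, X.empty_subset,
      fun _ h ↦ absurd h (Finset.notMem_empty _), ?_⟩
    have hnull (i) : μ.real (S ∩ T i) = 0 :=
      (measureReal_eq_zero_iff (measure_ne_top_of_subset inter_subset_left hS)).2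
        (measure_mono_null inter_subset_left hS₀)
    simp only [hnull, Finset.sum_const_zero, Finset.card_empty, Nat.cast_zero, zero_mul, le_refl]
  have hT_int (i) (hi : i ∈ X) : IntegrableOn ((T i).indicator (1 : α → ℝ)) S μ :=
    (integrableOn_const hS).indicator (hT i hi)
  have hSpos : 0 < μ.real S := toReal_pos hS₀ hS
  obtain ⟨c, -, hc⟩ := exists_setAverage_le hS₀ hS (integrable_finsetSum X hT_int)
  refine ⟨c, {i ∈ X | c ∈ T i}, X.filter_subset _, fun i hi ↦ (Finset.mem_filter.1 hi).2, ?_⟩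
  have hcard : ∑ i ∈ X, (T i).indicator (1 : α → ℝ) c = (X.filter fun i ↦ c ∈ T i).card := by
    simp only [indicator_apply, Pi.one_apply, Finset.sum_boole]
  have hintegral : ∫ y in S, ∑ i ∈ X, (T i).indicator (1 : α → ℝ) y ∂μ =
      ∑ i ∈ X, μ.real (S ∩ T i) := by
    rw [integral_finsetSum X hT_int]
    refine Finset.sum_congr rfl fun i hi ↦ ?_
    rw [integral_indicator_one (hT i hi), measureReal_restrict_apply (hT i hi), inter_comm]
  rwa [setAverage_eq, hintegral, smul_eq_mul, hcard, inv_mul_le_iff₀ hSpos, mul_comm] at hc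

theorem card_mul_le_measureReal_of_pairwiseDisjoint {Z : Finset ι} {F : ι → Set α} {S : Set α}
    {v : ℝ} (hdisj : (Z : Set ι).PairwiseDisjoint F) (hF : ∀ z ∈ Z, MeasurableSet (F z))
    (hsub : ∀ z ∈ Z, F z ⊆ S) (hS : μ S ≠ ∞) (hv : ∀ z ∈ Z, v ≤ μ.real (F z)) :
    Z.card * v ≤ μ.real S :=
  calc Z.card * v ≤ ∑ z ∈ Z, μ.real (F z) := by
        rw [← nsmul_eq_mul]
        exact Finset.card_nsmul_le_sum _ _ _ hv
    _ = μ.real (⋃ z ∈ Z, F z) := (measureReal_biUnion_finset hdisj hF fun z hz ↦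
        measure_ne_top_of_subset (hsub z hz) hS).symm
    _ ≤ μ.real S := measureReal_mono (iUnion₂_subset hsub) hS

end Measure

section Segment

open Metric Module Set AffineMap

variable {E : Type*} [NormedAddCommGroup E] [NormedSpace ℝ E]

theorem isCompact_segment (a b : E) : IsCompact (segment ℝ a b) := by
  rw [segment_eq_image_lineMap]
  exact isCompact_Icc.image lineMap_continuous

theorem mem_cthickening_segment {δ : ℝ} (hδ : 0 ≤ δ) {a b y : E} :
    y ∈ cthickening δ (segment ℝ a b) ↔ ∃ s ∈ Icc (0 : ℝ) 1, dist y (lineMap a b s) ≤ δ := by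
  rw [(isCompact_segment a b).cthickening_eq_biUnion_closedBall hδ, segment_eq_image_lineMap]
  simp only [mem_iUnion, mem_closedBall, exists_prop, exists_mem_image]

theorem dist_le_add_of_mem_cthickening_segment {δ : ℝ} (hδ : 0 ≤ δ) {a b x y : E}
    (hx : x ∈ segment ℝ a b) (hy : y ∈ cthickening δ (segment ℝ a b)) :
    dist x y ≤ dist a b + δ := by
  rw [segment_eq_image_lineMap] at hx
  obtain ⟨u, hu, rfl⟩ := hx
  obtain ⟨s, hs, hys⟩ := (mem_cthickening_segment hδ).1 hy
  calc dist (lineMap a b u) y ≤ dist (lineMap a b u) (lineMap a b s) + dist (lineMap a b s) y :=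
        dist_triangle _ _ _
    _ ≤ 1 * dist a b + δ := by
        rw [dist_lineMap_lineMap, dist_comm _ y]
        gcongr
        exact (Real.dist_le_of_mem_Icc_01 hu hs)
    _ = dist a b + δ := by rw [one_mul]

theorem cthickening_segment_subset_cthickening_line (δ : ℝ) (a b : E) :
    cthickening δ (segment ℝ a b) ⊆ cthickening δ (line[ℝ, a, b] : Set E) := by
  apply cthickening_subset_of_subset
  rw [← convexHull_pair]
  exact convexHull_subset_affineSpan _

theorem dist_lineMap_lineMap_le_of_dist_le {a b a' b' : E} {η : ℝ} (ha : dist a a' ≤ η)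
    (hb : dist b b' ≤ η) (s : ℝ) :
    dist (lineMap a b s) (lineMap a' b' s) ≤ (|1 - s| + |s|) * η := by
  calc dist (lineMap a b s) (lineMap a' b' s) = ‖(1 - s) • (a - a') + s • (b - b')‖ := by
        rw [dist_eq_norm, lineMap_apply_module, lineMap_apply_module, smul_sub, smul_sub]
        congr 1
        abel
    _ ≤ |1 - s| * dist a a' + |s| * dist b b' := by
        refine (norm_add_le _ _).trans_eq ?_
        rw [norm_smul, norm_smul, Real.norm_eq_abs, Real.norm_eq_abs, dist_eq_norm, dist_eq_norm]
    _ ≤ (|1 - s| + |s|) * η := by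
        rw [add_mul]
        gcongr

theorem exists_dist_lineMap_le {a b a' b' : E} {s t s' t' η ℓ u : ℝ} (hℓ : 0 < ℓ)
    (hst : ℓ ≤ |t - s|) (hs : dist (lineMap a b s) (lineMap a' b' s') ≤ η)
    (ht : dist (lineMap a b t) (lineMap a' b' t') ≤ η) (hus : |u - s| ≤ 1) (hut : |t - u| ≤ 1) :
    ∃ w : ℝ, dist (lineMap a b u) (lineMap a' b' w) ≤ 2 / ℓ * η := by
  have hst₀ : t - s ≠ 0 := abs_pos.1 (hℓ.trans_le hst)
  have hη : 0 ≤ η := dist_nonneg.trans hs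
  set τ := (u - s) / (t - s) with hτ
  have hu : lineMap a b u = lineMap (lineMap a b s : E) (lineMap a b t) τ := by
    rw [← apply_lineMap, lineMap_apply_ring', hτ, div_mul_cancel₀ _ hst₀, sub_add_cancel]
  have hdiv {w : ℝ} (hw : |w| ≤ 1) : |w / (t - s)| ≤ 1 / ℓ := by
    rw [abs_div]
    gcongr
  have hτ₁ : |1 - τ| ≤ 1 / ℓ := by
    rw [hτ, one_sub_div hst₀, sub_sub_sub_cancel_right]
    exact hdiv hut
  refine ⟨lineMap s' t' τ, ?_⟩
  rw [apply_lineMap, hu]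
  calc dist (lineMap (lineMap a b s) (lineMap a b t) τ)
        (lineMap (lineMap a' b' s') (lineMap a' b' t') τ)
      ≤ (|1 - τ| + |τ|) * η := dist_lineMap_lineMap_le_of_dist_le hs ht τ
    _ ≤ (1 / ℓ + 1 / ℓ) * η := by
        gcongr
        exact hdiv hus
    _ = 2 / ℓ * η := by ring

theorem exists_finset_card_mul_le_abs_sub_le {ρ R : ℝ} (hρ : 0 < ρ) (hR : 0 ≤ R) (s₀ : ℝ) :
    ∃ F : Finset ℝ, F.card * ρ ≤ 2 * R + ρ ∧ ∀ s, |s - s₀| ≤ R → ∃ u ∈ F, |s - u| ≤ ρ := by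
  classical
  set N := ⌊2 * R / ρ⌋₊
  refine ⟨(Finset.range (N + 1)).image fun k : ℕ ↦ s₀ - R + k * ρ, ?_, fun s hs ↦ ?_⟩
  · have hN : N * ρ ≤ 2 * R := (le_div_iff₀ hρ).1 (Nat.floor_le (by positivity))
    calc (((Finset.range (N + 1)).image fun k : ℕ ↦ s₀ - R + k * ρ).card : ℝ) * ρ
        ≤ (N + 1 : ℕ) * ρ := by
          gcongr
          exact Finset.card_image_le.trans_eq (Finset.card_range _)
      _ ≤ 2 * R + ρ := by
          push_cast
          linarith
  obtain ⟨hlower, hupper⟩ := abs_le.1 hs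
  have hu₀ : 0 ≤ (s - (s₀ - R)) / ρ := div_nonneg (by linarith) hρ.le
  refine ⟨_, Finset.mem_image_of_mem _ (Finset.mem_range_succ_iff.2
    (Nat.floor_le_floor (by gcongr; linarith : (s - (s₀ - R)) / ρ ≤ 2 * R / ρ))), ?_⟩
  have hfloor_le := (le_div_iff₀ hρ).1 (Nat.floor_le hu₀)
  have hlt_floor := (div_lt_iff₀ hρ).1 (Nat.lt_floor_add_one ((s - (s₀ - R)) / ρ))
  exact abs_le.2 ⟨by linarith, by linarith⟩

variable [FiniteDimensional ℝ E]

theorem mem_cthickening_line {δ : ℝ} (hδ : 0 ≤ δ) {a b y : E} :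
    y ∈ cthickening δ (line[ℝ, a, b] : Set E) ↔ ∃ s : ℝ, dist y (lineMap a b s) ≤ δ := by
  have hclosed : IsClosed (line[ℝ, a, b] : Set E) := AffineSubspace.closed_of_finiteDimensional _
  simp only [hclosed.cthickening_eq_biUnion_closedBall hδ, mem_iUnion, mem_closedBall, exists_prop,
    SetLike.mem_coe, mem_affineSpan_pair_iff_exists_lineMap_eq, exists_exists_eq_and]

theorem exists_cover_cthickening_line_inter_closedBall {ρ r : ℝ} (hρ : 0 < ρ) (hρr : ρ ≤ r)
    {a b : E} (hab : dist a b = 1) (c : E) :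
    ∃ s : Finset E, s.card * ρ ≤ 9 * r ∧
      cthickening ρ (line[ℝ, a, b] : Set E) ∩ closedBall c r ⊆ ⋃ x ∈ s, closedBall x (2 * ρ) := by
  classical
  rcases (cthickening ρ (line[ℝ, a, b] : Set E) ∩ closedBall c r).eq_empty_or_nonempty
    with hempty | ⟨y₀, hy₀, hy₀c⟩
  · exact ⟨∅, by simp only [Finset.card_empty, Nat.cast_zero]; linarith, hempty ▸ empty_subset _⟩
  have hdist (s t : ℝ) : dist (lineMap a b s) (lineMap a b t) = |s - t| := by
    rw [dist_lineMap_lineMap, hab, mul_one, Real.dist_eq]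
  obtain ⟨s₀, hs₀⟩ := (mem_cthickening_line hρ.le).1 hy₀
  obtain ⟨F, hFcard, hF⟩ :=
    exists_finset_card_mul_le_abs_sub_le hρ (by linarith : 0 ≤ 2 * r + 2 * ρ) s₀
  refine ⟨F.image (lineMap a b), ?_, fun y ⟨hy, hyc⟩ ↦ ?_⟩
  · calc ((F.image (lineMap a b)).card : ℝ) * ρ ≤ F.card * ρ := by
          gcongr
          exact Finset.card_image_le
      _ ≤ 9 * r := by linarith
  obtain ⟨s, hs⟩ := (mem_cthickening_line hρ.le).1 hy
  have hss₀ : |s - s₀| ≤ 2 * r + 2 * ρ := by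
    rw [mem_closedBall] at hyc hy₀c
    linarith [hdist s s₀, dist_triangle4 (lineMap a b s) y y₀ (lineMap a b s₀),
      dist_triangle_right y y₀ c, dist_comm y (lineMap a b s)]
  obtain ⟨u, huF, hsu⟩ := hF s hss₀
  refine mem_iUnion₂.2 ⟨lineMap a b u, Finset.mem_image_of_mem _ huF, mem_closedBall.2 ?_⟩
  linarith [hdist s u, dist_triangle y (lineMap a b s) (lineMap a b u)]

theorem mem_cthickening_line_of_two_common_points {δ r : ℝ} (hδ : 0 < δ) (hr : 0 < r) (hr1 : r ≤ 1)
    {a b a' b' x y z : E} (hab : dist a b = 1) (hx : x ∈ segment ℝ a b) (hyz : r ≤ dist y z)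
    (hy : y ∈ cthickening δ (segment ℝ a b)) (hz : z ∈ cthickening δ (segment ℝ a b))
    (hy' : y ∈ cthickening δ (line[ℝ, a', b'] : Set E))
    (hz' : z ∈ cthickening δ (line[ℝ, a', b'] : Set E)) :
    x ∈ cthickening (12 * δ / r) (line[ℝ, a', b'] : Set E) := by
  have hdist (s t : ℝ) : dist (lineMap a b s) (lineMap a b t) = |s - t| := by
    rw [dist_lineMap_lineMap, hab, mul_one, Real.dist_eq]
  rw [segment_eq_image_lineMap] at hx
  obtain ⟨u, hu, rfl⟩ := hx
  obtain ⟨s, hsI, hs⟩ := (mem_cthickening_segment hδ.le).1 hy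
  obtain ⟨t, htI, ht⟩ := (mem_cthickening_segment hδ.le).1 hz
  obtain ⟨s', hs'⟩ := (mem_cthickening_line hδ.le).1 hy'
  obtain ⟨t', ht'⟩ := (mem_cthickening_line hδ.le).1 hz'
  have hss' : dist (lineMap a b s) (lineMap a' b' s') ≤ 2 * δ := by
    linarith [dist_triangle_left (lineMap a b s) (lineMap a' b' s') y]
  have htt' : dist (lineMap a b t) (lineMap a' b' t') ≤ 2 * δ := by
    linarith [dist_triangle_left (lineMap a b t) (lineMap a' b' t') z]
  have hus : |u - s| ≤ 1 := Real.dist_le_of_mem_Icc_01 hu hsI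
  rw [mem_cthickening_line (by positivity)]
  rcases lt_or_ge r (4 * δ) with hrδ | hδr
  · refine ⟨s', (dist_triangle _ (lineMap a b s) _).trans ?_⟩
    rw [hdist, le_div_iff₀ hr]
    nlinarith
  · have hst : r / 2 ≤ |t - s| := by
      linarith [hdist s t, abs_sub_comm s t, dist_comm z (lineMap a b t),
        dist_triangle4 y (lineMap a b s) (lineMap a b t) z]
    obtain ⟨w, hw⟩ := exists_dist_lineMap_le (half_pos hr) hst hss' htt' hus
      (Real.dist_le_of_mem_Icc_01 htI hu)
    refine ⟨w, hw.trans ?_⟩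
    rw [div_div_eq_mul_div, div_mul_eq_mul_div]
    gcongr ?_ / r
    linarith

variable [MeasurableSpace E] (μ : Measure E)

theorem measure_cthickening_segment_ne_top [IsFiniteMeasureOnCompacts μ] (δ : ℝ) (a b : E) :
    μ (cthickening δ (segment ℝ a b)) ≠ ∞ :=
  (isCompact_segment a b).cthickening.measure_ne_top

theorem measureReal_unit_ball_pos [μ.IsAddHaarMeasure] : 0 < μ.real (ball (0 : E) 1) :=
  toReal_pos (measure_ball_pos μ 0 one_pos).ne' measure_ball_lt_top.ne

variable [BorelSpace E] [μ.IsAddHaarMeasure]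

theorem card_mul_le_measureReal_of_disjoint_ball {ι : Type*} {s : Finset ι} {c : ι → E} {r : ℝ}
    {A : Set E} (hr : 0 < r) (hA : μ A ≠ ∞)
    (hdisj : (s : Set ι).PairwiseDisjoint fun i ↦ ball (c i) r) (hsub : ∀ i ∈ s, ball (c i) r ⊆ A) :
    s.card * (r ^ finrank ℝ E * μ.real (ball 0 1)) ≤ μ.real A := by
  have hball (i : ι) : μ.real (ball (c i) r) = r ^ finrank ℝ E * μ.real (ball 0 1) := by
    rw [measureReal_def, Measure.addHaar_ball_of_pos μ _ hr, toReal_mul,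
      toReal_ofReal (by positivity), measureReal_def]
  exact card_mul_le_measureReal_of_pairwiseDisjoint hdisj (fun _ _ ↦ measurableSet_ball) hsub hA
    fun i _ ↦ (hball i).ge

theorem card_mul_le_measureReal_of_isSeparated {X : Finset E} {r : ℝ} {A : Set E} (hr : 0 < r)
    (hA : μ A ≠ ∞) (hX : IsSeparated (ENNReal.ofReal (2 * r)) (X : Set E))
    (hsub : ∀ x ∈ X, ball x r ⊆ A) :
    X.card * (r ^ finrank ℝ E * μ.real (ball 0 1)) ≤ μ.real A := by
  refine card_mul_le_measureReal_of_disjoint_ball μ hr hA (fun x hx y hy hxy ↦ ?_) hsub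
  have hdist : ENNReal.ofReal (2 * r) < edist x y := hX hx hy hxy
  rw [edist_dist, ENNReal.ofReal_lt_ofReal_iff_of_nonneg (by positivity)] at hdist
  exact ball_disjoint_ball (by linarith)

theorem measure_le_of_forall_isSeparated_card_le {r N : ℝ} (hr : 0 ≤ r) {A : Set E}
    (h : ∀ X : Finset E, (X : Set E) ⊆ A → IsSeparated (ENNReal.ofReal r) (X : Set E) →
      X.card ≤ N) :
    μ A ≤ ENNReal.ofReal (N * (r ^ finrank ℝ E * μ.real (ball 0 1))) := by
  have hpack : packingNumber r.toNNReal A ≠ ⊤ := by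
    refine ne_top_of_le_ne_top (ENat.natCast_ne_top ⌊N⌋₊) (iSup₂_le fun C hCA ↦ iSup_le fun hC ↦ ?_)
    by_contra! hlt
    obtain ⟨X, hXC, hX⟩ := exists_subset_encard_eq (Order.add_one_le_of_lt hlt)
    lift X to Finset E using finite_of_encard_eq_coe hX
    rw [encard_coe_eq_coe_finsetCard] at hX
    have hcard := Nat.le_floor (h X (hXC.trans hCA) (hC.mono hXC))
    norm_cast at hX
    omega
  obtain ⟨X, hX⟩ : ∃ X : Finset E, (X : Set E) = maximalSeparatedSet r.toNNReal A :=
    (encard_ne_top_iff.1 (by rwa [encard_maximalSeparatedSet hpack])).exists_finset_coe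
  have hcover : A ⊆ ⋃ x ∈ X, closedBall x r := by
    have := isCover_iff_subset_iUnion_closedBall.1 (isCover_maximalSeparatedSet hpack)
    rwa [← hX, Real.coe_toNNReal r hr] at this
  calc μ A ≤ ∑ x ∈ X, μ (closedBall x r) :=
        (measure_mono hcover).trans (measure_biUnion_finset_le _ _)
    _ = ENNReal.ofReal (X.card * (r ^ finrank ℝ E * μ.real (ball 0 1))) := by
        simp only [μ.addHaar_closedBall _ hr, Finset.sum_const, nsmul_eq_mul]
        rw [ofReal_mul (by positivity), ofReal_mul (by positivity), ofReal_natCast,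
          ofReal_measureReal measure_ball_lt_top.ne]
    _ ≤ ENNReal.ofReal (N * (r ^ finrank ℝ E * μ.real (ball 0 1))) := by
        gcongr
        exact h X (hX ▸ maximalSeparatedSet_subset) (hX ▸ isSeparated_maximalSeparatedSet)

end Segment

section Bush

open Metric Module Set AffineMap

variable {E : Type*} [NormedAddCommGroup E] [MeasurableSpace E] (μ : Measure E)

/-- The constant of the bush bound `card_mul_le_sq_measureReal`, in dimension `m + 1`. -/
noncomputable def bushConst (m : ℕ) : ℝ :=
  144 * 96 ^ m * (72 * 2 ^ m) ^ m * (8 / μ.real (ball 0 1) ^ 2)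

variable [NormedSpace ℝ E]

/-- The unit segment from `a` to `b` passes through `x`, and the set `S` fills at least the
proportion `t` of its `δ`-tube. -/
structure IsRichSegment (δ t : ℝ) (S : Set E) (x a b : E) : Prop where
  dist_eq_one : dist a b = 1
  mem_segment : x ∈ segment ℝ a b
  mul_measureReal_le : t * μ.real (cthickening δ (segment ℝ a b)) ≤
    μ.real (S ∩ cthickening δ (segment ℝ a b))

variable [FiniteDimensional ℝ E] [μ.IsAddHaarMeasure]

theorem bushConst_pos (m : ℕ) : 0 < bushConst μ m := by
  have hball := measureReal_unit_ball_pos μ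
  rw [bushConst]
  positivity

variable [BorelSpace E] {m : ℕ} (hE : finrank ℝ E = m + 1)
include hE

theorem le_measureReal_cthickening_segment {δ : ℝ} (hδ : 0 < δ) {a b : E} (hab : dist a b = 1) :
    μ.real (ball 0 1) / 2 * δ ^ m ≤ μ.real (cthickening δ (segment ℝ a b)) := by
  set N := ⌊1 / (2 * δ)⌋₊
  let c (k : ℕ) : E := lineMap a b (2 * δ * k)
  have hdisj : (Finset.range (N + 1) : Set ℕ).PairwiseDisjoint fun k ↦ ball (c k) δ := by
    intro k _ l _ hkl
    refine ball_disjoint_ball ?_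
    have hkl' : (1 : ℝ) ≤ |(k : ℝ) - l| := by
      exact_mod_cast Int.one_le_abs (sub_ne_zero.2 (Int.ofNat_inj.not.2 hkl))
    rw [dist_lineMap_lineMap, hab, mul_one, Real.dist_eq, ← mul_sub, abs_mul,
      abs_of_pos (by positivity)]
    nlinarith
  have hsub : ∀ k ∈ Finset.range (N + 1), ball (c k) δ ⊆ cthickening δ (segment ℝ a b) := by
    intro k hk y hy
    have hkN : (k : ℝ) ≤ 1 / (2 * δ) :=
      (Nat.le_floor_iff (by positivity)).1 (Finset.mem_range_succ_iff.1 hk)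
    rw [le_div_iff₀' (by positivity)] at hkN
    exact (mem_cthickening_segment hδ.le).2
      ⟨2 * δ * k, ⟨by positivity, hkN⟩, (mem_ball.1 hy).le⟩
  have hN : 1 ≤ (N + 1) * (2 * δ) :=
    (div_le_iff₀ (by positivity)).1 (Nat.lt_floor_add_one (1 / (2 * δ))).le
  calc μ.real (ball 0 1) / 2 * δ ^ m
      ≤ ((N + 1) * (2 * δ)) * (μ.real (ball 0 1) / 2 * δ ^ m) :=
        le_mul_of_one_le_left (by positivity) hN
    _ = (Finset.range (N + 1)).card * (δ ^ finrank ℝ E * μ.real (ball 0 1)) := by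
        rw [Finset.card_range, hE]
        push_cast
        ring
    _ ≤ _ := card_mul_le_measureReal_of_disjoint_ball μ hδ
        (measure_cthickening_segment_ne_top μ δ a b) hdisj hsub

theorem measureReal_cthickening_line_inter_closedBall_le {ρ r : ℝ} (hρ : 0 < ρ) (hr : 0 ≤ r)
    {a b : E} (hab : dist a b = 1) (c : E) :
    μ.real (cthickening ρ (line[ℝ, a, b] : Set E) ∩ closedBall c r) ≤
      18 * 2 ^ m * μ.real (ball 0 1) * r * ρ ^ m := by
  rcases lt_or_ge r ρ with hrρ | hρr
  · calc μ.real (cthickening ρ (line[ℝ, a, b] : Set E) ∩ closedBall c r)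
        ≤ μ.real (closedBall c r) :=
          measureReal_mono inter_subset_right measure_closedBall_lt_top.ne
      _ = 1 * 1 * μ.real (ball 0 1) * r * r ^ m := by
          rw [Measure.addHaar_real_closedBall μ c hr, hE]
          ring
      _ ≤ 18 * 2 ^ m * μ.real (ball 0 1) * r * ρ ^ m := by
          gcongr
          · norm_num
          · exact one_le_pow₀ one_le_two
  · obtain ⟨s, hcard, hcover⟩ := exists_cover_cthickening_line_inter_closedBall hρ hρr hab c
    calc μ.real (cthickening ρ (line[ℝ, a, b] : Set E) ∩ closedBall c r)
        ≤ μ.real (⋃ x ∈ s, closedBall x (2 * ρ)) :=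
          measureReal_mono hcover (s.isCompact_biUnion
            fun x _ ↦ isCompact_closedBall x (2 * ρ)).measure_ne_top
      _ ≤ ∑ x ∈ s, μ.real (closedBall x (2 * ρ)) := measureReal_biUnion_finset_le _ _
      _ = (s.card * ρ) * (2 * 2 ^ m * μ.real (ball 0 1) * ρ ^ m) := by
          simp only [Measure.addHaar_real_closedBall μ _ (by positivity : 0 ≤ 2 * ρ), hE,
            Finset.sum_const, nsmul_eq_mul]
          ring
      _ ≤ 9 * r * (2 * 2 ^ m * μ.real (ball 0 1) * ρ ^ m) := by gcongr
      _ = 18 * 2 ^ m * μ.real (ball 0 1) * r * ρ ^ m := by ring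

omit [MeasurableSpace E] [BorelSpace E] in
theorem card_mul_le_of_isSeparated_of_subset_cthickening_line {δ ρ r : ℝ} (hδ : 0 < δ)
    (hδρ : δ ≤ ρ) (hδr : δ ≤ r) {X : Finset E} (hX : IsSeparated (ENNReal.ofReal δ) (X : Set E))
    {a b c : E} (hab : dist a b = 1)
    (hXsub : (X : Set E) ⊆ cthickening ρ (line[ℝ, a, b] : Set E) ∩ closedBall c r) :
    X.card * δ ^ (m + 1) ≤ 72 * 8 ^ m * r * ρ ^ m := by
  have hsub : ∀ x ∈ X, ball x (δ / 2) ⊆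
      cthickening (2 * ρ) (line[ℝ, a, b] : Set E) ∩ closedBall c (2 * r) := by
    intro x hx y hy
    obtain ⟨hxline, hxc⟩ := hXsub hx
    obtain ⟨s, hs⟩ := (mem_cthickening_line (hδ.le.trans hδρ)).1 hxline
    rw [mem_ball] at hy
    rw [mem_closedBall] at hxc
    exact ⟨(mem_cthickening_line (by linarith)).2
      ⟨s, (dist_triangle y x _).trans (by linarith)⟩,
      mem_closedBall.2 ((dist_triangle y x c).trans (by linarith))⟩
  borelize E
  let μ : Measure E := Measure.addHaar
  have hvol : X.card * δ ^ (m + 1) * (μ.real (ball 0 1) / 2 ^ (m + 1)) ≤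
      72 * 8 ^ m * r * ρ ^ m * (μ.real (ball 0 1) / 2 ^ (m + 1)) :=
    calc X.card * δ ^ (m + 1) * (μ.real (ball 0 1) / 2 ^ (m + 1))
        = X.card * ((δ / 2) ^ finrank ℝ E * μ.real (ball 0 1)) := by rw [hE, div_pow]; ring
      _ ≤ μ.real (cthickening (2 * ρ) (line[ℝ, a, b] : Set E) ∩ closedBall c (2 * r)) :=
          card_mul_le_measureReal_of_isSeparated μ (by positivity)
            (measure_inter_ne_top_of_right_ne_top measure_closedBall_lt_top.ne)
            (by rwa [mul_div_cancel₀ δ two_ne_zero]) hsub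
      _ ≤ 18 * 2 ^ m * μ.real (ball 0 1) * (2 * r) * (2 * ρ) ^ m :=
          measureReal_cthickening_line_inter_closedBall_le μ hE (by linarith) (by linarith) hab c
      _ = 72 * 8 ^ m * r * ρ ^ m * (μ.real (ball 0 1) / 2 ^ (m + 1)) := by
          rw [show (8 : ℝ) ^ m = 2 ^ m * 2 ^ m * 2 ^ m by rw [← mul_pow, ← mul_pow]; norm_num]
          field_simp
          ring
  have hball : 0 < μ.real (ball (0 : E) 1) := measureReal_unit_ball_pos μ
  exact le_of_mul_le_mul_right hvol (by positivity)

omit [MeasurableSpace E] [BorelSpace E] in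
theorem card_mul_le_of_touching {δ r : ℝ} (hδ : 0 < δ) (hδ1 : δ ≤ 1) (hr : 0 < r) (hr1 : r ≤ 1)
    {W : Finset E} (hW : IsSeparated (ENNReal.ofReal δ) (W : Set E)) {a b : E → E} {a' b' c : E}
    (hab : ∀ x ∈ W, dist (a x) (b x) = 1) (hmem : ∀ x ∈ W, x ∈ segment ℝ (a x) (b x))
    (hc : ∀ x ∈ W, c ∈ cthickening δ (segment ℝ (a x) (b x)))
    (hab' : dist a' b' = 1) (hc' : c ∈ cthickening δ (segment ℝ a' b'))
    (htouch : ∀ x ∈ W, ((cthickening δ (segment ℝ (a x) (b x)) ∩ cthickening δ (segment ℝ a' b')) \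
      closedBall c r).Nonempty) :
    W.card * (δ * r ^ m) ≤ 144 * 96 ^ m := by
  have hδr : δ ≤ 12 * δ / r := by
    rw [le_div_iff₀ hr]
    nlinarith
  have hsub : (W : Set E) ⊆
      cthickening (12 * δ / r) (line[ℝ, a', b'] : Set E) ∩ closedBall c 2 := by
    intro x hx
    obtain ⟨y, ⟨hy, hy'⟩, hyc⟩ := htouch x hx
    have hline := cthickening_segment_subset_cthickening_line δ a' b'
    refine ⟨mem_cthickening_line_of_two_common_points hδ hr hr1 (hab x hx) (hmem x hx)
      (not_le.1 hyc).le hy (hc x hx) (hline hy') (hline hc'), ?_⟩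
    have hdist := dist_le_add_of_mem_cthickening_segment hδ.le (hmem x hx) (hc x hx)
    rw [mem_closedBall]
    linarith [hab x hx]
  have hcount := card_mul_le_of_isSeparated_of_subset_cthickening_line hE hδ hδr (by linarith) hW
    hab' hsub
  refine le_of_mul_le_mul_right ?_ (by positivity : 0 < (δ / r) ^ m)
  calc W.card * (δ * r ^ m) * (δ / r) ^ m = W.card * δ ^ (m + 1) := by
        rw [div_pow, pow_succ]
        field_simp
    _ ≤ 72 * 8 ^ m * 2 * (12 * δ / r) ^ m := hcount
    _ = 144 * 96 ^ m * (δ / r) ^ m := by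
        rw [mul_div_assoc, mul_pow, show (96 : ℝ) = 8 * 12 by norm_num, mul_pow]
        ring

namespace IsRichSegment

variable {μ} {δ t : ℝ} {S : Set E} {x a b : E}

theorem mul_le_measureReal (h : IsRichSegment μ δ t S x a b) (hδ : 0 < δ) (ht : 0 ≤ t) :
    t * (μ.real (ball 0 1) / 2 * δ ^ m) ≤ μ.real (S ∩ cthickening δ (segment ℝ a b)) :=
  (mul_le_mul_of_nonneg_left (le_measureReal_cthickening_segment μ hE hδ h.dist_eq_one) ht).trans
    h.mul_measureReal_le

theorem le_one (h : IsRichSegment μ δ t S x a b) (hδ : 0 < δ) : t ≤ 1 := by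
  have hball := measureReal_unit_ball_pos μ
  have htube : 0 < μ.real (cthickening δ (segment ℝ a b)) :=
    lt_of_lt_of_le (by positivity) (le_measureReal_cthickening_segment μ hE hδ h.dist_eq_one)
  refine le_of_mul_le_mul_right ?_ htube
  rw [one_mul]
  exact h.mul_measureReal_le.trans (measureReal_mono inter_subset_right
    (measure_cthickening_segment_ne_top μ δ a b))

theorem mul_le_measureReal_diff_closedBall (h : IsRichSegment μ δ t S x a b) (hδ : 0 < δ)
    (ht : 0 ≤ t) (c : E) :
    t * μ.real (ball 0 1) / 4 * δ ^ m ≤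
      μ.real ((S ∩ cthickening δ (segment ℝ a b)) \ closedBall c (t / (72 * 2 ^ m))) := by
  set T := cthickening δ (segment ℝ a b)
  set D := closedBall c (t / (72 * 2 ^ m))
  have hnear : μ.real (S ∩ T ∩ D) ≤ t * μ.real (ball 0 1) / 4 * δ ^ m :=
    calc μ.real (S ∩ T ∩ D)
        ≤ μ.real (cthickening δ (line[ℝ, a, b] : Set E) ∩ D) :=
          measureReal_mono (inter_subset_inter_left _ (inter_subset_right.trans
              (cthickening_segment_subset_cthickening_line δ a b)))
            (measure_inter_ne_top_of_right_ne_top measure_closedBall_lt_top.ne)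
      _ ≤ 18 * 2 ^ m * μ.real (ball 0 1) * (t / (72 * 2 ^ m)) * δ ^ m :=
          measureReal_cthickening_line_inter_closedBall_le μ hE hδ (by positivity) h.dist_eq_one c
      _ = t * μ.real (ball 0 1) / 4 * δ ^ m := by field_simp; ring
  have hsplit : μ.real (S ∩ T ∩ D) + μ.real ((S ∩ T) \ D) = μ.real (S ∩ T) :=
    measureReal_inter_add_sdiff measurableSet_closedBall (measure_inter_ne_top_of_right_ne_top
      (measure_cthickening_segment_ne_top μ δ a b))
  linarith [h.mul_le_measureReal hE hδ ht]

end IsRichSegment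

theorem card_mul_le_of_common_mem {δ t : ℝ} (hδ : 0 < δ) (hδ1 : δ ≤ 1) (ht : 0 < t) {S : Set E}
    (hS : MeasurableSet S) (hSfin : μ S ≠ ∞) {Y : Finset E}
    (hY : IsSeparated (ENNReal.ofReal δ) (Y : Set E)) {a b : E → E} {c : E}
    (hrich : ∀ x ∈ Y, IsRichSegment μ δ t S x (a x) (b x))
    (hc : ∀ x ∈ Y, c ∈ cthickening δ (segment ℝ (a x) (b x))) :
    Y.card * (δ * (t / (72 * 2 ^ m)) ^ m) * (t * μ.real (ball 0 1) / 4 * δ ^ m) ≤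
      144 * 96 ^ m * μ.real S := by
  rcases Y.eq_empty_or_nonempty with rfl | ⟨x₀, hx₀⟩
  · simp only [Finset.card_empty, Nat.cast_zero, zero_mul]
    positivity
  set r := t / (72 * 2 ^ m)
  have hr1 : r ≤ 1 := div_le_one_of_le₀ (((hrich x₀ hx₀).le_one hE hδ).trans (by
    nlinarith [one_le_pow₀ (one_le_two (α := ℝ)) (n := m)])) (by positivity)
  have hball := measureReal_unit_ball_pos μ
  let far (x : E) : Set E := (S ∩ cthickening δ (segment ℝ (a x) (b x))) \ closedBall c r
  have hfar (x) (hx : x ∈ Y) : t * μ.real (ball 0 1) / 4 * δ ^ m ≤ μ.real (far x) :=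
    (hrich x hx).mul_le_measureReal_diff_closedBall hE hδ ht.le c
  have hne (x) (hx : x ∈ Y) : (far x).Nonempty :=
    nonempty_of_measureReal_ne_zero (lt_of_lt_of_le (by positivity) (hfar x hx)).ne'
  obtain ⟨Z, hZY, hdisj, hYZ⟩ : ∃ Z ⊆ Y, (Z : Set E).PairwiseDisjoint far ∧
      Y.card * (δ * r ^ m) ≤ Z.card * (144 * 96 ^ m) :=
    exists_pairwiseDisjoint_card_mul_le hne (by positivity) fun z hz W hWY hW ↦
      card_mul_le_of_touching hE hδ hδ1 (by positivity) hr1 (hY.mono hWY)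
        (fun x hx ↦ (hrich x (hWY hx)).dist_eq_one) (fun x hx ↦ (hrich x (hWY hx)).mem_segment)
        (fun x hx ↦ hc x (hWY hx)) (hrich z hz).dist_eq_one (hc z hz)
        fun x hx ↦ (hW x hx).mono fun y hy ↦ ⟨⟨hy.1.1.2, hy.2.1.2⟩, hy.1.2⟩
  have hZ : Z.card * (t * μ.real (ball 0 1) / 4 * δ ^ m) ≤ μ.real S :=
    card_mul_le_measureReal_of_pairwiseDisjoint hdisj
      (fun _ _ ↦ (hS.inter isClosed_cthickening.measurableSet).diff measurableSet_closedBall)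
      (fun _ _ ↦ sdiff_subset.trans inter_subset_left) hSfin fun z hz ↦ hfar z (hZY hz)
  calc Y.card * (δ * r ^ m) * (t * μ.real (ball 0 1) / 4 * δ ^ m)
      ≤ Z.card * (144 * 96 ^ m) * (t * μ.real (ball 0 1) / 4 * δ ^ m) := by gcongr
    _ = 144 * 96 ^ m * (Z.card * (t * μ.real (ball 0 1) / 4 * δ ^ m)) := by ring
    _ ≤ 144 * 96 ^ m * μ.real S := by gcongr

theorem card_mul_le_sq_measureReal {δ t : ℝ} (hδ : 0 < δ) (hδ1 : δ ≤ 1) (ht : 0 < t) {S : Set E}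
    (hS : MeasurableSet S) (hSfin : μ S ≠ ∞) {X : Finset E}
    (hX : IsSeparated (ENNReal.ofReal δ) (X : Set E)) {a b : E → E}
    (hrich : ∀ x ∈ X, IsRichSegment μ δ t S x (a x) (b x)) :
    X.card * (t ^ (m + 2) * δ ^ (2 * m + 1)) ≤ bushConst μ m * μ.real S ^ 2 := by
  have hball := measureReal_unit_ball_pos μ
  rw [bushConst]
  set v := μ.real (ball (0 : E) 1)
  have hsum : X.card * (t * (v / 2 * δ ^ m)) ≤
      ∑ x ∈ X, μ.real (S ∩ cthickening δ (segment ℝ (a x) (b x))) := by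
    rw [← nsmul_eq_mul]
    exact Finset.card_nsmul_le_sum _ _ _ fun x hx ↦ (hrich x hx).mul_le_measureReal hE hδ ht.le
  obtain ⟨c, Y, hYX, hc, hXY⟩ := exists_subset_common_mem_sum_measureReal_inter_le X
    (fun x _ ↦ (isClosed_cthickening (δ := δ) (E := segment ℝ (a x) (b x))).measurableSet) hSfin
  have hbush := card_mul_le_of_common_mem μ hE hδ hδ1 ht hS hSfin (hX.mono hYX)
    (fun x hx ↦ hrich x (hYX hx)) hc
  calc X.card * (t ^ (m + 2) * δ ^ (2 * m + 1))
      = X.card * (t * (v / 2 * δ ^ m)) * (2 / v * t ^ (m + 1) * δ ^ (m + 1)) := by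
        field_simp
        ring
    _ ≤ Y.card * μ.real S * (2 / v * t ^ (m + 1) * δ ^ (m + 1)) :=
        mul_le_mul_of_nonneg_right (hsum.trans hXY) (by positivity)
    _ = Y.card * (δ * (t / (72 * 2 ^ m)) ^ m) * (t * v / 4 * δ ^ m) *
          ((72 * 2 ^ m) ^ m * (8 / v ^ 2) * μ.real S) := by
        rw [div_pow]
        field_simp
        ring
    _ ≤ 144 * 96 ^ m * μ.real S * ((72 * 2 ^ m) ^ m * (8 / v ^ 2) * μ.real S) := by gcongr
    _ = 144 * 96 ^ m * (72 * 2 ^ m) ^ m * (8 / v ^ 2) * μ.real S ^ 2 := by ring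

end Bush

section Dyadic

open Set

theorem le_add_sum_dyadic_of_monotone {φ : ℝ≥0∞ → ℝ≥0∞} (hφ : Monotone φ) (a : ℝ≥0∞) {L : ℕ}
    {t : ℝ≥0∞} (ht : t ≤ a * 2 ^ L) :
    φ t ≤ φ a + ∑ k ∈ Finset.range L,
      (Ioi (a * 2 ^ k)).indicator (fun _ ↦ φ (a * 2 ^ (k + 1))) t := by
  induction L with
  | zero =>
    rw [Finset.sum_range_zero, add_zero]
    exact hφ (by rwa [pow_zero, mul_one] at ht)
  | succ L ih =>
    rw [Finset.sum_range_succ, ← add_assoc]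
    rcases le_or_gt t (a * 2 ^ L) with hle | hlt
    · exact (ih hle).trans le_self_add
    · rw [indicator_of_mem (mem_Ioi.2 hlt)]
      exact (hφ ht).trans le_add_self

theorem two_add_sum_range_two_pow (L : ℕ) :
    2 + ∑ k ∈ Finset.range L, (2 : ℝ≥0∞) ^ (k + 1) = 2 * 2 ^ L := by
  induction L with
  | zero => simp
  | succ L ih => rw [Finset.sum_range_succ, ← add_assoc, ih]; ring

theorem le_rpow_mul_rpow_of_le {a t : ℝ≥0∞} (ha : a ≠ 0) (ha' : a ≠ ∞) (hat : a ≤ t)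
    {p : ℝ} (hp : 1 < p) :
    t ≤ a ^ (1 - p) * t ^ p := by
  rcases eq_or_ne t ∞ with rfl | ht
  · rw [top_rpow_of_pos (one_pos.trans hp),
      mul_top (ENNReal.rpow_pos (pos_iff_ne_zero.2 ha) ha').ne']
  have ht₀ : t ≠ 0 := (ha.bot_lt.trans_le hat).ne'
  calc t = a ^ (1 - p) * (a ^ (p - 1) * t) := by
        rw [← mul_assoc, ← ENNReal.rpow_add _ _ ha ha', sub_add_sub_cancel, sub_self,
          ENNReal.rpow_zero, one_mul]
    _ ≤ a ^ (1 - p) * (t ^ (p - 1) * t) := by gcongr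
    _ = a ^ (1 - p) * t ^ p := by
        nth_rw 2 [← ENNReal.rpow_one t]
        rw [← ENNReal.rpow_add _ _ ht₀ ht, sub_add_cancel]

theorem lintegral_comp_le_add_sum_dyadic {α : Type*} [MeasurableSpace α] (ν : Measure α)
    {φ : ℝ≥0∞ → ℝ≥0∞} (hφ : Monotone φ) (a : ℝ≥0∞) {L : ℕ} {u : α → ℝ≥0∞}
    (hu : ∀ x, u x ≤ a * 2 ^ L) :
    ∫⁻ x, φ (u x) ∂ν ≤
      φ a * ν univ + ∑ k ∈ Finset.range L, φ (a * 2 ^ (k + 1)) * ν {x | a * 2 ^ k < u x} := by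
  let F (k : ℕ) : Set α := toMeasurable ν {x | a * 2 ^ k < u x}
  calc ∫⁻ x, φ (u x) ∂ν
      ≤ ∫⁻ x, φ a + ∑ k ∈ Finset.range L, (F k).indicator (fun _ ↦ φ (a * 2 ^ (k + 1))) x ∂ν := by
        refine lintegral_mono fun x ↦ (le_add_sum_dyadic_of_monotone hφ a (hu x)).trans ?_
        gcongr with k
        exact indicator_le_indicator_of_subset (s := {x | a * 2 ^ k < u x})
          (f := fun _ ↦ φ (a * 2 ^ (k + 1))) (subset_toMeasurable ν _) (fun _ ↦ zero_le) x
    _ = _ := by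
        have hF (k) : MeasurableSet (F k) := measurableSet_toMeasurable _ _
        rw [lintegral_add_left measurable_const, lintegral_const,
          lintegral_finsetSum _ fun k _ ↦ measurable_const.indicator (hF k)]
        simp only [lintegral_indicator_const (hF _), F, measure_toMeasurable]

theorem lintegral_rpow_le_of_measure_lt_le {α : Type*} [MeasurableSpace α] {ν : Measure α}
    {u : α → ℝ≥0∞} {q B a : ℝ} (hq : 0 < q) (ha : 0 < a) {L : ℕ}
    (hu : ∀ x, u x ≤ ENNReal.ofReal a * 2 ^ L)
    (hweak : ∀ t, a ≤ t → ν {x | ENNReal.ofReal t < u x} ≤ ENNReal.ofReal (B / t ^ q)) :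
    ∫⁻ x, u x ^ q ∂ν ≤ ENNReal.ofReal (a ^ q) * ν univ + ENNReal.ofReal (L * (2 ^ q * B)) := by
  have hofReal (j : ℕ) : ENNReal.ofReal a * 2 ^ j = ENNReal.ofReal (a * 2 ^ j) := by
    rw [ofReal_mul ha.le, ofReal_pow zero_le_two, ofReal_ofNat]
  have hlevel (k : ℕ) : (ENNReal.ofReal a * 2 ^ (k + 1)) ^ q *
      ν {x | ENNReal.ofReal a * 2 ^ k < u x} ≤ ENNReal.ofReal (2 ^ q * B) := by
    rw [hofReal, hofReal, ofReal_rpow_of_pos (by positivity)]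
    grw [hweak (a * 2 ^ k) (le_mul_of_one_le_right ha.le (one_le_pow₀ one_le_two))]
    rw [← ofReal_mul (by positivity), pow_succ, ← mul_assoc,
      Real.mul_rpow (by positivity) zero_le_two]
    refine (congrArg ENNReal.ofReal ?_).le
    field_simp
  refine (lintegral_comp_le_add_sum_dyadic ν (monotone_rpow_of_nonneg hq.le) _ hu).trans ?_
  grw [Finset.sum_le_sum fun k _ ↦ hlevel k]
  rw [Finset.sum_const, Finset.card_range, nsmul_eq_mul, ← ofReal_natCast,
    ← ofReal_mul L.cast_nonneg, ofReal_rpow_of_pos ha]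

theorem measure_ofReal_lt_le_rpow {α : Type*} [MeasurableSpace α] {ν : Measure α} {g : α → ℝ≥0∞}
    (hg : Measurable g) {p : ℝ} (hp : 0 < p) (hgp : ∫⁻ x, g x ^ p ∂ν ≤ 1) {c : ℝ} (hc : 0 < c) :
    ν {x | ENNReal.ofReal c < g x} ≤ ENNReal.ofReal (c ^ (-p)) :=
  calc ν {x | ENNReal.ofReal c < g x}
      ≤ ν {x | ENNReal.ofReal (c ^ p) ≤ g x ^ p} := measure_mono fun x hx ↦ by
        rw [mem_ofPred_eq, ← ofReal_rpow_of_pos hc]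
        exact ENNReal.rpow_le_rpow (le_of_lt hx) hp.le
    _ ≤ (∫⁻ x, g x ^ p ∂ν) / ENNReal.ofReal (c ^ p) := by
        refine meas_ge_le_lintegral_div (hg.pow_const p).aemeasurable ?_ ofReal_ne_top
        exact (ofReal_pos.2 (by positivity)).ne'
    _ ≤ 1 / ENNReal.ofReal (c ^ p) := by gcongr
    _ = ENNReal.ofReal (c ^ (-p)) := by
        rw [one_div, ← ofReal_inv_of_pos (by positivity), Real.rpow_neg hc.le]

theorem exists_nat_le_two_rpow_mul {a η : ℝ} (ha : 0 < a) (hη : 0 < η) :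
    ∃ C : ℝ, 0 < C ∧ ∀ y : ℝ, 0 ≤ y → ∃ L : ℕ, y ≤ 2 ^ (L * a) ∧ L + 1 ≤ C * (1 + y) ^ η := by
  refine ⟨1 / (η * Real.log 2 * a) + 2, by positivity, fun y hy ↦
    ⟨⌈Real.logb 2 (1 + y) / a⌉₊, ?_, ?_⟩⟩
  · calc y ≤ 1 + y := le_add_of_nonneg_left zero_le_one
      _ = 2 ^ Real.logb 2 (1 + y) := (Real.rpow_logb two_pos (by norm_num) (by linarith)).symm
      _ ≤ 2 ^ (⌈Real.logb 2 (1 + y) / a⌉₊ * a) :=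
        Real.rpow_le_rpow_of_exponent_le one_le_two ((div_le_iff₀ ha).1 (Nat.le_ceil _))
  · have hlogb : 0 ≤ Real.logb 2 (1 + y) := Real.logb_nonneg one_lt_two (by linarith)
    have hone : 1 ≤ (1 + y) ^ η := Real.one_le_rpow (by linarith) hη.le
    have hlog : Real.log (1 + y) ≤ (1 + y) ^ η / η := Real.log_le_rpow_div (by linarith) hη
    calc (⌈Real.logb 2 (1 + y) / a⌉₊ : ℝ) + 1
        ≤ Real.log (1 + y) / (Real.log 2 * a) + 2 := by
          rw [← div_div, Real.log_div_log]
          linarith [Nat.ceil_lt_add_one (div_nonneg hlogb ha.le)]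
      _ ≤ (1 + y) ^ η / η / (Real.log 2 * a) + 2 * (1 + y) ^ η := by gcongr; linarith
      _ = (1 / (η * Real.log 2 * a) + 2) * (1 + y) ^ η := by
          field_simp

theorem exists_nat_two_pow_rpow_le {c p η : ℝ} (hc : 0 < c) (hp : 1 < p) (hη : 0 < η) :
    ∃ C : ℝ, 0 < C ∧ ∀ d : ℝ, 0 < d → d ≤ 1 → ∃ L : ℕ,
      ((2 : ℝ≥0∞) ^ L) ^ (1 - p) ≤ ENNReal.ofReal (c * d) ∧ L + 1 ≤ C * d ^ (-η) := by
  obtain ⟨C, hC, h⟩ := exists_nat_le_two_rpow_mul (sub_pos.2 hp) hη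
  refine ⟨C * (1 + c⁻¹) ^ η, by positivity, fun d hd hd1 ↦ ?_⟩
  obtain ⟨L, hlow, hup⟩ := h (c * d)⁻¹ (by positivity)
  refine ⟨L, ?_, ?_⟩
  · rw [← ofReal_ofNat, ← ofReal_pow zero_le_two, ofReal_rpow_of_pos (by positivity)]
    refine ofReal_le_ofReal ?_
    calc ((2 : ℝ) ^ L) ^ (1 - p) = (2 ^ (L * (p - 1)))⁻¹ := by
          rw [← Real.rpow_natCast_mul zero_le_two, ← Real.rpow_neg zero_le_two, ← mul_neg, neg_sub]
      _ ≤ c * d := inv_le_of_inv_le₀ (by positivity) hlow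
  · have hinv : 1 + (c * d)⁻¹ ≤ (1 + c⁻¹) * d⁻¹ := by
      rw [mul_inv, add_mul, one_mul]
      gcongr
      exact (one_le_inv₀ hd).2 hd1
    calc (L : ℝ) + 1 ≤ C * ((1 + c⁻¹) * d⁻¹) ^ η := hup.trans (by gcongr)
      _ = C * (1 + c⁻¹) ^ η * d ^ (-η) := by
        rw [Real.mul_rpow (by positivity) (by positivity), Real.inv_rpow hd.le, Real.rpow_neg hd.le,
          mul_assoc]

theorem sq_div_mul_div_rpow {d s t : ℝ} (hd : 0 < d) (hs : 0 < s) (ht : 0 < t) (m : ℕ) (e : ℝ) :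
    s ^ 2 / (d * t ^ (m + 2)) * (s / (d * t)) ^ e =
      d ^ (-(e + 1)) * (s ^ (e + 2) / t ^ (e + (m + 2))) := by
  have htpow : t ^ (e + (m + 2)) = t ^ e * t ^ (m + 2) := by
    rw [← Real.rpow_natCast t (m + 2), ← Real.rpow_add ht, Nat.cast_add, Nat.cast_ofNat]
  rw [htpow, Real.rpow_neg hd.le, Real.rpow_add_one hd.ne', Real.rpow_add hs, Real.rpow_two,
    Real.div_rpow hs.le (by positivity), Real.mul_rpow hd.le ht.le]
  field_simp

end Dyadic

section NikodymMax

open Metric Set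

variable {E : Type*} [NormedAddCommGroup E] [NormedSpace ℝ E] [MeasurableSpace E]

/-- The Nikodym maximal function of `g` at scale `δ`: the supremum of the averages of `g` over the
closed `δ`-neighbourhoods of the unit segments through `x`. -/
noncomputable def nikodymMax (μ : Measure E) (δ : ℝ) (g : E → ℝ≥0∞) (x : E) : ℝ≥0∞ :=
  ⨆ (a : E) (b : E) (_ : dist a b = 1) (_ : x ∈ segment ℝ a b),
    ⨍⁻ y in cthickening δ (segment ℝ a b), g y ∂μ

variable {μ : Measure E}

theorem nikodymMax_le_iff {δ : ℝ} {g : E → ℝ≥0∞} {x : E} {c : ℝ≥0∞} :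
    nikodymMax μ δ g x ≤ c ↔ ∀ a b, dist a b = 1 → x ∈ segment ℝ a b →
      ⨍⁻ y in cthickening δ (segment ℝ a b), g y ∂μ ≤ c := by
  simp only [nikodymMax, iSup_le_iff]

theorem setLAverage_le_nikodymMax {a b x : E} (hab : dist a b = 1) (hx : x ∈ segment ℝ a b) (δ : ℝ)
    (g : E → ℝ≥0∞) : ⨍⁻ y in cthickening δ (segment ℝ a b), g y ∂μ ≤ nikodymMax μ δ g x :=
  le_iSup_of_le a <| le_iSup_of_le b <| le_iSup_of_le hab <| le_iSup_of_le hx le_rfl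

theorem lt_nikodymMax_iff {δ : ℝ} {g : E → ℝ≥0∞} {x : E} {c : ℝ≥0∞} :
    c < nikodymMax μ δ g x ↔ ∃ a b, dist a b = 1 ∧ x ∈ segment ℝ a b ∧
      c < ⨍⁻ y in cthickening δ (segment ℝ a b), g y ∂μ := by
  simp only [nikodymMax, lt_iSup_iff, exists_prop]

theorem nikodymMax_mono {δ : ℝ} {g h : E → ℝ≥0∞} (hgh : g ≤ h) (x : E) :
    nikodymMax μ δ g x ≤ nikodymMax μ δ h x :=
  nikodymMax_le_iff.2 fun _ _ hab hx ↦
    (setLAverage_mono_ae _ (.of_forall hgh)).trans (setLAverage_le_nikodymMax hab hx δ h)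

theorem nikodymMax_add_le {g : E → ℝ≥0∞} (hg : Measurable g) (δ : ℝ) (h : E → ℝ≥0∞) (x : E) :
    nikodymMax μ δ (fun y ↦ g y + h y) x ≤ nikodymMax μ δ g x + nikodymMax μ δ h x := by
  refine nikodymMax_le_iff.2 fun a b hab hx ↦ ?_
  rw [laverage_eq', lintegral_add_left hg]
  exact add_le_add (setLAverage_le_nikodymMax hab hx δ g) (setLAverage_le_nikodymMax hab hx δ h)

theorem nikodymMax_finsetSum_le {ι : Type*} (s : Finset ι) {g : ι → E → ℝ≥0∞}
    (hg : ∀ i ∈ s, Measurable (g i)) (δ : ℝ) (x : E) :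
    nikodymMax μ δ (fun y ↦ ∑ i ∈ s, g i y) x ≤ ∑ i ∈ s, nikodymMax μ δ (g i) x := by
  refine nikodymMax_le_iff.2 fun a b hab hx ↦ ?_
  rw [laverage_eq', lintegral_finsetSum s hg]
  exact Finset.sum_le_sum fun i _ ↦ setLAverage_le_nikodymMax hab hx δ (g i)

theorem nikodymMax_const_mul {g : E → ℝ≥0∞} (hg : Measurable g) (δ : ℝ) (c : ℝ≥0∞) (x : E) :
    nikodymMax μ δ (fun y ↦ c * g y) x = c * nikodymMax μ δ g x := by
  simp only [nikodymMax, mul_iSup, laverage_eq', lintegral_const_mul c hg]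

theorem nikodymMax_const_le (δ : ℝ) (c : ℝ≥0∞) (x : E) : nikodymMax μ δ (fun _ ↦ c) x ≤ c := by
  refine nikodymMax_le_iff.2 fun a b _ _ ↦ ?_
  rw [setLAverage_eq, setLIntegral_const]
  exact ENNReal.div_le_of_le_mul le_rfl

theorem nikodymMax_indicator_one_le_one (δ : ℝ) (S : Set E) (x : E) :
    nikodymMax μ δ (S.indicator 1) x ≤ 1 :=
  (nikodymMax_mono (indicator_le_self' fun _ _ ↦ zero_le) x).trans (nikodymMax_const_le δ 1 x)

theorem lintegral_nikodymMax_rpow_le_mul_of_normalized {ν : Measure E} {p q δ : ℝ} (hp : 0 < p)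
    (hq : 0 < q) {B : ℝ≥0∞} (hB : B ≠ 0) (hB' : B ≠ ∞)
    (h : ∀ g : E → ℝ≥0∞, Measurable g → ∫⁻ y, g y ^ p ∂μ ≤ 1 →
      (∫⁻ x, nikodymMax μ δ g x ^ q ∂ν) ^ (1 / q) ≤ B) {g : E → ℝ≥0∞} (hg : Measurable g) :
    (∫⁻ x, nikodymMax μ δ g x ^ q ∂ν) ^ (1 / q) ≤ B * (∫⁻ y, g y ^ p ∂μ) ^ (1 / p) := by
  -- Rescaling by a number `A` strictly above the norm of `g` avoids dividing by a zero norm.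
  refine ENNReal.le_mul_of_forall_lt (.inl hB) (.inl hB') fun B' hBB' A hA ↦ ?_
  refine le_trans ?_ (mul_le_mul_left hBB'.le A)
  rcases eq_or_ne A ∞ with rfl | hA'
  · rw [mul_top hB]
    exact le_top
  have hA₀ : A ≠ 0 := hA.ne_bot
  have hgp : ∫⁻ y, (A⁻¹ * g y) ^ p ∂μ ≤ 1 := by
    simp only [ENNReal.mul_rpow_of_nonneg _ _ hp.le]
    rw [lintegral_const_mul _ (hg.pow_const p), ENNReal.inv_rpow, mul_comm, ← div_eq_mul_inv]
    refine ENNReal.div_le_of_le_mul ?_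
    rw [one_mul]
    rw [one_div] at hA
    exact ((ENNReal.rpow_inv_lt_iff hp).1 hA).le
  have hscale (x : E) : nikodymMax μ δ g x = A * nikodymMax μ δ (fun y ↦ A⁻¹ * g y) x := by
    rw [nikodymMax_const_mul hg, ← mul_assoc, ENNReal.mul_inv_cancel hA₀ hA', one_mul]
  simp only [hscale, ENNReal.mul_rpow_of_nonneg _ _ hq.le]
  rw [lintegral_const_mul' _ _ (ENNReal.rpow_ne_top_of_nonneg hq.le hA'),
    ENNReal.mul_rpow_of_nonneg _ _ (by positivity), ← ENNReal.rpow_mul, mul_one_div_cancel hq.ne',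
    ENNReal.rpow_one, mul_comm]
  gcongr
  exact h _ (hg.const_mul _) hgp

variable [FiniteDimensional ℝ E] [IsFiniteMeasureOnCompacts μ]

theorem exists_isRichSegment_of_lt_nikodymMax_indicator {δ t : ℝ} (ht : 0 ≤ t)
    {S : Set E} (hS : MeasurableSet S) {x : E}
    (h : ENNReal.ofReal t < nikodymMax μ δ (S.indicator 1) x) :
    ∃ a b, IsRichSegment μ δ t S x a b := by
  obtain ⟨a, b, hab, hx, hlt⟩ := lt_nikodymMax_iff.1 h
  refine ⟨a, b, hab, hx, ?_⟩
  set T := cthickening δ (segment ℝ a b)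
  have hT : μ T ≠ ∞ := measure_cthickening_segment_ne_top μ δ a b
  rw [setLAverage_eq, lintegral_indicator_one hS, Measure.restrict_apply hS] at hlt
  have hle : ENNReal.ofReal t * μ T ≤ μ (S ∩ T) := ENNReal.mul_le_of_le_div hlt.le
  have hreal := ENNReal.toReal_mono (measure_inter_ne_top_of_right_ne_top hT) hle
  rwa [toReal_mul, toReal_ofReal ht] at hreal

end NikodymMax

section WeakType

open Metric Module Set

variable {E : Type*} [NormedAddCommGroup E] [NormedSpace ℝ E] [FiniteDimensional ℝ E]
  [MeasurableSpace E] [BorelSpace E] (μ : Measure E) [μ.IsAddHaarMeasure] {m : ℕ}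
  (hE : finrank ℝ E = m + 1)
include hE

theorem measure_lt_nikodymMax_indicator_le {δ t : ℝ} (hδ : 0 < δ) (hδ1 : δ ≤ 1) (ht : 0 < t)
    {S : Set E} (hS : MeasurableSet S) (hSfin : μ S ≠ ∞) :
    μ {x | ENNReal.ofReal t < nikodymMax μ δ (S.indicator 1) x} ≤ ENNReal.ofReal
      (bushConst μ m * μ.real (ball 0 1) * μ.real S ^ 2 / (δ ^ m * t ^ (m + 2))) := by
  choose! a b hrich using
    fun x (hx : ENNReal.ofReal t < nikodymMax μ δ (S.indicator 1) x) ↦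
      exists_isRichSegment_of_lt_nikodymMax_indicator ht.le hS hx
  have hpack := measure_le_of_forall_isSeparated_card_le μ hδ.le
    (A := {x | ENNReal.ofReal t < nikodymMax μ δ (S.indicator 1) x})
    (N := bushConst μ m * μ.real S ^ 2 / (t ^ (m + 2) * δ ^ (2 * m + 1))) fun X hXA hX ↦ by
      rw [le_div_iff₀ (by positivity)]
      exact card_mul_le_sq_measureReal μ hE hδ hδ1 ht hS hSfin hX fun x hx ↦ hrich x (hXA hx)
  rw [hE] at hpack
  refine hpack.trans_eq (congrArg ENNReal.ofReal ?_)
  field_simp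
  ring

theorem measure_lt_nikodymMax_indicator_le_rpow {q : ℝ} (hq : m + 2 ≤ q) {δ t : ℝ} (hδ : 0 < δ)
    (hδ1 : δ ≤ 1) (ht : 0 < t) {S : Set E} (hS : MeasurableSet S) (hSfin : μ S ≠ ∞) :
    μ {x | ENNReal.ofReal t < nikodymMax μ δ (S.indicator 1) x} ≤ ENNReal.ofReal
      (bushConst μ m * μ.real (ball 0 1) * (2 / μ.real (ball 0 1)) ^ (q - m - 2) *
        ((δ ^ m) ^ (-(q - m - 1)) * (μ.real S ^ (q - m) / t ^ q))) := by
  have hball := measureReal_unit_ball_pos μ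
  have hC := bushConst_pos μ m
  rcases eq_empty_or_nonempty {x | ENNReal.ofReal t < nikodymMax μ δ (S.indicator 1) x} with
    hempty | ⟨x, hx⟩
  · rw [hempty, measure_empty]
    exact zero_le
  obtain ⟨a, b, hrich⟩ := exists_isRichSegment_of_lt_nikodymMax_indicator ht.le hS hx
  refine (measure_lt_nikodymMax_indicator_le μ hE hδ hδ1 ht hS hSfin).trans (ofReal_le_ofReal ?_)
  set s := μ.real S
  set v := μ.real (ball (0 : E) 1)
  -- A single rich tube forces `t * δ ^ m ≲ s`, so the bound for `q = m + 2` may be weakened by a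
  -- power of `s / (δ ^ m * t)`.
  have hts : t * (v / 2 * δ ^ m) ≤ s := (hrich.mul_le_measureReal hE hδ ht.le).trans
    (measureReal_mono inter_subset_left hSfin)
  have hs : 0 < s := lt_of_lt_of_le (by positivity) hts
  obtain ⟨e, he, rfl⟩ : ∃ e : ℝ, 0 ≤ e ∧ q = e + (m + 2) := ⟨q - (m + 2), by linarith, by ring⟩
  have hone : 1 ≤ (2 / v * s / (δ ^ m * t)) ^ e := by
    refine Real.one_le_rpow ?_ he
    rw [one_le_div (by positivity)]
    calc δ ^ m * t = 2 / v * (t * (v / 2 * δ ^ m)) := by field_simp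
      _ ≤ 2 / v * s := by gcongr
  calc bushConst μ m * v * s ^ 2 / (δ ^ m * t ^ (m + 2))
      ≤ bushConst μ m * v * s ^ 2 / (δ ^ m * t ^ (m + 2)) * (2 / v * s / (δ ^ m * t)) ^ e :=
        le_mul_of_one_le_right (by positivity) hone
    _ = bushConst μ m * v * (2 / v) ^ e *
          (s ^ 2 / (δ ^ m * t ^ (m + 2)) * (s / (δ ^ m * t)) ^ e) := by
        rw [mul_div_assoc (2 / v) s, Real.mul_rpow (by positivity) (by positivity)]
        ring
    _ = bushConst μ m * v * (2 / v) ^ (e + (m + 2) - m - 2) * ((δ ^ m) ^ (-(e + (m + 2) - m - 1)) *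
          (s ^ (e + (m + 2) - m) / t ^ (e + (m + 2)))) := by
        rw [sq_div_mul_div_rpow (by positivity) hs ht]
        ring_nf

end WeakType

section StrongType

open Metric Module Set

variable {E : Type*} [NormedAddCommGroup E] [NormedSpace ℝ E] [FiniteDimensional ℝ E]
  [MeasurableSpace E] [BorelSpace E] {μ : Measure E} [μ.IsAddHaarMeasure] {m : ℕ}
  (hE : finrank ℝ E = m + 1)
include hE

theorem nikodymMax_le_lintegral_div {δ : ℝ} (hδ : 0 < δ) (g : E → ℝ≥0∞) (x : E) :
    nikodymMax μ δ g x ≤ (∫⁻ y, g y ∂μ) / ENNReal.ofReal (μ.real (ball 0 1) / 2 * δ ^ m) := by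
  refine nikodymMax_le_iff.2 fun a b hab _ ↦ ?_
  rw [setLAverage_eq]
  gcongr
  · exact Measure.restrict_le_self
  · exact ofReal_le_of_le_toReal (le_measureReal_cthickening_segment μ hE hδ hab)

theorem nikodymMax_le_two_add_sum {δ : ℝ} (hδ : 0 < δ) {p : ℝ} (hp : 1 < p) {g : E → ℝ≥0∞}
    (hg : Measurable g) (hgp : ∫⁻ y, g y ^ p ∂μ ≤ 1) {L : ℕ}
    (hL : ((2 : ℝ≥0∞) ^ L) ^ (1 - p) ≤ ENNReal.ofReal (μ.real (ball 0 1) / 2 * δ ^ m)) (x : E) :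
    nikodymMax μ δ g x ≤ 2 + ∑ k ∈ Finset.range L,
      2 ^ (k + 1) * nikodymMax μ δ ({y | 2 ^ k < g y}.indicator 1) x := by
  have hind (k : ℕ) : Measurable ({y | 2 ^ k < g y}.indicator (1 : E → ℝ≥0∞)) :=
    measurable_one.indicator (hg measurableSet_Ioi)
  have htail : nikodymMax μ δ (fun y ↦ ((2 : ℝ≥0∞) ^ L) ^ (1 - p) * g y ^ p) x ≤ 1 := by
    refine (nikodymMax_le_lintegral_div hE hδ _ x).trans (div_le_of_le_mul ?_)
    rw [lintegral_const_mul _ (hg.pow_const p), one_mul]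
    exact (mul_le_of_le_one_right' hgp).trans hL
  have hpointwise (y : E) : g y ≤ ((2 : ℝ≥0∞) ^ L) ^ (1 - p) * g y ^ p +
      (1 + ∑ k ∈ Finset.range L, 2 ^ (k + 1) * {y | 2 ^ k < g y}.indicator 1 y) := by
    rcases le_total (g y) (2 ^ L) with hle | hle
    · refine le_add_left ((le_add_sum_dyadic_of_monotone monotone_id 1
        (hle.trans_eq (one_mul _).symm)).trans_eq ?_)
      simp only [one_mul, id, indicator_apply, mem_Ioi, mem_ofPred_eq, Pi.one_apply, mul_ite,
        mul_one, mul_zero]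
    · exact le_add_right (le_rpow_mul_rpow_of_le (by positivity) (by finiteness) hle hp)
  calc nikodymMax μ δ g x
      ≤ nikodymMax μ δ (fun y ↦ ((2 : ℝ≥0∞) ^ L) ^ (1 - p) * g y ^ p + (1 + ∑ k ∈ Finset.range L,
          2 ^ (k + 1) * {y | 2 ^ k < g y}.indicator 1 y)) x := nikodymMax_mono hpointwise x
    _ ≤ 1 + (1 + ∑ k ∈ Finset.range L, nikodymMax μ δ
          (fun y ↦ 2 ^ (k + 1) * {y | 2 ^ k < g y}.indicator 1 y) x) := by
        refine (nikodymMax_add_le ((hg.pow_const p).const_mul _) δ _ x).trans ?_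
        gcongr
        refine (nikodymMax_add_le measurable_const δ _ x).trans ?_
        gcongr
        · exact nikodymMax_const_le δ 1 x
        · exact nikodymMax_finsetSum_le _ (fun k _ ↦ (hind k).const_mul _) δ x
    _ = _ := by
        simp only [nikodymMax_const_mul (hind _)]
        rw [← add_assoc, one_add_one_eq_two]

theorem nikodymMax_le_two_mul_two_pow {δ : ℝ} (hδ : 0 < δ) {p : ℝ} (hp : 1 < p) {g : E → ℝ≥0∞}
    (hg : Measurable g) (hgp : ∫⁻ y, g y ^ p ∂μ ≤ 1) {L : ℕ}
    (hL : ((2 : ℝ≥0∞) ^ L) ^ (1 - p) ≤ ENNReal.ofReal (μ.real (ball 0 1) / 2 * δ ^ m)) (x : E) :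
    nikodymMax μ δ g x ≤ 2 * 2 ^ L :=
  calc nikodymMax μ δ g x
      ≤ 2 + ∑ k ∈ Finset.range L, 2 ^ (k + 1) * nikodymMax μ δ ({y | 2 ^ k < g y}.indicator 1) x :=
        nikodymMax_le_two_add_sum hE hδ hp hg hgp hL x
    _ ≤ 2 + ∑ k ∈ Finset.range L, 2 ^ (k + 1) := by
        gcongr
        exact mul_le_of_le_one_right' (nikodymMax_indicator_one_le_one δ _ x)
    _ = 2 * 2 ^ L := two_add_sum_range_two_pow L

theorem exists_lt_nikodymMax_indicator_of_lt_nikodymMax {δ : ℝ} (hδ : 0 < δ) {p : ℝ} (hp : 1 < p)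
    {g : E → ℝ≥0∞} (hg : Measurable g) (hgp : ∫⁻ y, g y ^ p ∂μ ≤ 1) {L : ℕ}
    (hL : ((2 : ℝ≥0∞) ^ L) ^ (1 - p) ≤ ENNReal.ofReal (μ.real (ball 0 1) / 2 * δ ^ m)) {t : ℝ}
    (ht : 4 ≤ t) {x : E} (hx : ENNReal.ofReal t < nikodymMax μ δ g x) :
    ∃ k ∈ Finset.range L, ENNReal.ofReal (t / (2 ^ (k + 2) * L)) <
      nikodymMax μ δ ({y | 2 ^ k < g y}.indicator 1) x := by
  contrapose! hx
  have hlevel (k : ℕ) (hk : k ∈ Finset.range L) :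
      2 ^ (k + 1) * nikodymMax μ δ ({y | 2 ^ k < g y}.indicator 1) x ≤
        ENNReal.ofReal (t / 2 / L) := by
    have hL₀ : (0 : ℝ) < L := by exact_mod_cast (Finset.mem_range.1 hk).pos
    calc 2 ^ (k + 1) * nikodymMax μ δ ({y | 2 ^ k < g y}.indicator 1) x
        ≤ ENNReal.ofReal (2 ^ (k + 1)) * ENNReal.ofReal (t / (2 ^ (k + 2) * L)) := by
          rw [ofReal_pow zero_le_two, ofReal_ofNat]
          gcongr
          exact hx k hk
      _ = ENNReal.ofReal (t / 2 / L) := by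
          rw [← ofReal_mul (by positivity)]
          congr 1
          field_simp
          ring
  calc nikodymMax μ δ g x
      ≤ 2 + ∑ k ∈ Finset.range L, 2 ^ (k + 1) * nikodymMax μ δ ({y | 2 ^ k < g y}.indicator 1) x :=
        nikodymMax_le_two_add_sum hE hδ hp hg hgp hL x
    _ ≤ 2 + ∑ k ∈ Finset.range L, ENNReal.ofReal (t / 2 / L) := by
        gcongr with k hk
        exact hlevel k hk
    _ = ENNReal.ofReal (2 + L * (t / 2 / L)) := by
        rw [Finset.sum_const, Finset.card_range, nsmul_eq_mul, ← ofReal_natCast,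
          ← ofReal_mul L.cast_nonneg, ofReal_add zero_le_two (by positivity), ofReal_ofNat]
    _ ≤ ENNReal.ofReal t := by
        refine ofReal_le_ofReal ?_
        have hdiv : (L : ℝ) * (t / 2 / L) ≤ t / 2 := by
          rw [mul_div_left_comm]
          exact mul_le_of_le_one_right (by positivity) (div_self_le_one _)
        linarith

theorem measure_lt_nikodymMax_superlevel_indicator_le {p q : ℝ} (hp : 0 < p) (hq : m + 2 ≤ q)
    (hpq : p * (q - m) = q) {δ t : ℝ} (hδ : 0 < δ) (hδ1 : δ ≤ 1) (ht : 0 < t) {g : E → ℝ≥0∞}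
    (hg : Measurable g) (hgp : ∫⁻ y, g y ^ p ∂μ ≤ 1) {L k : ℕ} (hk : k < L) :
    μ {x | ENNReal.ofReal (t / (2 ^ (k + 2) * L)) <
        nikodymMax μ δ ({y | 2 ^ k < g y}.indicator 1) x} ≤ ENNReal.ofReal
      (bushConst μ m * μ.real (ball 0 1) * (2 / μ.real (ball 0 1)) ^ (q - m - 2) *
        ((δ ^ m) ^ (-(q - m - 1)) * ((4 * L) ^ q / t ^ q))) := by
  have hball := measureReal_unit_ball_pos μ
  have hC := bushConst_pos μ m
  have hL : (0 : ℝ) < L := by exact_mod_cast hk.pos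
  have hS : μ {y | 2 ^ k < g y} ≤ ENNReal.ofReal ((2 ^ k) ^ (-p)) := by
    simpa only [ofReal_pow zero_le_two, ofReal_ofNat] using
      measure_ofReal_lt_le_rpow hg hp hgp (c := 2 ^ k) (by positivity)
  refine (measure_lt_nikodymMax_indicator_le_rpow μ hE hq hδ hδ1 (by positivity)
    (hg measurableSet_Ioi) (hS.trans_lt ofReal_lt_top).ne).trans (ofReal_le_ofReal ?_)
  have hSreal : μ.real {y | 2 ^ k < g y} ≤ (2 ^ k) ^ (-p) :=
    toReal_le_of_le_ofReal (by positivity) hS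
  gcongr _ * (_ * ?_)
  calc μ.real {y | 2 ^ k < g y} ^ (q - m) / (t / (2 ^ (k + 2) * L)) ^ q
      ≤ ((2 ^ k) ^ (-p)) ^ (q - m) / (t / (2 ^ (k + 2) * L)) ^ q := by
        gcongr
        linarith
    _ = ((2 ^ k) ^ q)⁻¹ * ((2 ^ k) * (4 * L)) ^ q / t ^ q := by
        rw [← Real.rpow_mul (by positivity), neg_mul, hpq, Real.rpow_neg (by positivity),
          Real.div_rpow ht.le (by positivity)]
        field_simp
        ring_nf
    _ = (4 * L) ^ q / t ^ q := by
        rw [Real.mul_rpow (by positivity) (by positivity)]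
        field_simp

theorem exists_measure_lt_nikodymMax_le {p q : ℝ} (hp : 1 < p) (hq : m + 2 ≤ q)
    (hpq : p * (q - m) = q) :
    ∃ C : ℝ, 0 < C ∧ ∀ (δ : ℝ) (t : ℝ) (g : E → ℝ≥0∞) (L : ℕ), 0 < δ → δ ≤ 1 → 4 ≤ t →
      Measurable g → ∫⁻ y, g y ^ p ∂μ ≤ 1 →
      ((2 : ℝ≥0∞) ^ L) ^ (1 - p) ≤ ENNReal.ofReal (μ.real (ball 0 1) / 2 * δ ^ m) →
      μ {x | ENNReal.ofReal t < nikodymMax μ δ g x} ≤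
        ENNReal.ofReal (C * L ^ (q + 1) * (δ ^ m) ^ (-(q - m - 1)) / t ^ q) := by
  have hball := measureReal_unit_ball_pos μ
  have hC := bushConst_pos μ m
  set C := bushConst μ m * μ.real (ball 0 1) * (2 / μ.real (ball 0 1)) ^ (q - m - 2)
  refine ⟨C * 4 ^ q, by positivity, fun δ t g L hδ hδ1 ht hg hgp hL ↦ ?_⟩
  have ht₀ : 0 < t := by linarith
  have hq₀ : 0 < q + 1 := by linarith [m.cast_nonneg (α := ℝ)]
  calc μ {x | ENNReal.ofReal t < nikodymMax μ δ g x}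
      ≤ μ (⋃ k ∈ Finset.range L, {x | ENNReal.ofReal (t / (2 ^ (k + 2) * L)) <
          nikodymMax μ δ ({y | 2 ^ k < g y}.indicator 1) x}) :=
        measure_mono fun x hx ↦ by
          simpa only [mem_iUnion₂, exists_prop, mem_ofPred_eq] using
            exists_lt_nikodymMax_indicator_of_lt_nikodymMax hE hδ hp hg hgp hL ht hx
    _ ≤ ∑ k ∈ Finset.range L, ENNReal.ofReal
          (C * ((δ ^ m) ^ (-(q - m - 1)) * ((4 * L) ^ q / t ^ q))) :=
        (measure_biUnion_finset_le _ _).trans <| Finset.sum_le_sum fun k hk ↦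
          measure_lt_nikodymMax_superlevel_indicator_le hE (by linarith) hq hpq hδ hδ1 ht₀ hg hgp
            (Finset.mem_range.1 hk)
    _ = ENNReal.ofReal (L * (C * ((δ ^ m) ^ (-(q - m - 1)) * ((4 * L) ^ q / t ^ q)))) := by
        rw [Finset.sum_const, Finset.card_range, nsmul_eq_mul, ← ofReal_natCast,
          ← ofReal_mul L.cast_nonneg]
    _ = ENNReal.ofReal (C * 4 ^ q * L ^ (q + 1) * (δ ^ m) ^ (-(q - m - 1)) / t ^ q) := by
        rw [Real.mul_rpow (by positivity) L.cast_nonneg,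
          Real.rpow_add_one' L.cast_nonneg hq₀.ne']
        ring_nf

theorem exists_setLIntegral_nikodymMax_rpow_le {K : Set E} (hK : μ K ≠ ∞) {p q : ℝ} (hp : 1 < p)
    (hq : m + 2 ≤ q) (hpq : p * (q - m) = q) :
    ∃ C : ℝ, 0 < C ∧ ∀ (δ : ℝ) (g : E → ℝ≥0∞) (L : ℕ), 0 < δ → δ ≤ 1 →
      Measurable g → ∫⁻ y, g y ^ p ∂μ ≤ 1 →
      ((2 : ℝ≥0∞) ^ L) ^ (1 - p) ≤ ENNReal.ofReal (μ.real (ball 0 1) / 2 * δ ^ m) →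
      ∫⁻ x in K, nikodymMax μ δ g x ^ q ∂μ ≤
        ENNReal.ofReal (C * (L + 1) ^ (q + 2) * (δ ^ m) ^ (-(q - m - 1))) := by
  obtain ⟨C, hC, hweak⟩ := exists_measure_lt_nikodymMax_le hE (μ := μ) hp hq hpq
  have hq₀ : 0 < q := by linarith [m.cast_nonneg (α := ℝ)]
  refine ⟨4 ^ q * μ.real K + C * 2 ^ q, by positivity, fun δ g L hδ hδ1 hg hgp hL ↦ ?_⟩
  set D := (δ ^ m) ^ (-(q - m - 1))
  have hD : 1 ≤ D := Real.one_le_rpow_of_pos_of_le_one_of_nonpos (by positivity)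
    (pow_le_one₀ hδ.le hδ1) (by linarith)
  have hbound (x : E) : nikodymMax μ δ g x ≤ ENNReal.ofReal 4 * 2 ^ L := by
    refine (nikodymMax_le_two_mul_two_pow hE hδ hp hg hgp hL x).trans ?_
    rw [ofReal_ofNat]
    gcongr
    norm_num
  have hLpow : 1 ≤ ((L : ℝ) + 1) ^ (q + 2) := Real.one_le_rpow (by simp) (by positivity)
  have hLmul : L * (L : ℝ) ^ (q + 1) ≤ (L + 1) ^ (q + 2) := by
    rw [mul_comm, ← Real.rpow_add_one' L.cast_nonneg (by positivity), add_assoc,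
      one_add_one_eq_two]
    gcongr
    linarith
  calc ∫⁻ x in K, nikodymMax μ δ g x ^ q ∂μ
      ≤ ENNReal.ofReal (4 ^ q) * μ K + ENNReal.ofReal (L * (2 ^ q * (C * L ^ (q + 1) * D))) := by
        rw [← Measure.restrict_apply_univ]
        exact lintegral_rpow_le_of_measure_lt_le hq₀ four_pos hbound fun t ht ↦
          (Measure.restrict_le_self _).trans (hweak δ t g L hδ hδ1 ht hg hgp hL)
    _ = ENNReal.ofReal (4 ^ q * μ.real K * 1 * 1 + C * 2 ^ q * (L * L ^ (q + 1)) * D) := by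
        rw [← ofReal_measureReal hK, ← ofReal_mul (by positivity),
          ← ofReal_add (by positivity) (by positivity)]
        ring_nf
    _ ≤ ENNReal.ofReal (4 ^ q * μ.real K * (L + 1) ^ (q + 2) * D +
          C * 2 ^ q * (L + 1) ^ (q + 2) * D) := by gcongr
    _ = ENNReal.ofReal ((4 ^ q * μ.real K + C * 2 ^ q) * (L + 1) ^ (q + 2) * D) := by ring_nf

theorem exists_setLIntegral_nikodymMax_rpow_le_of_lintegral_le_one {K : Set E} (hK : μ K ≠ ∞)
    {p q ε : ℝ} (hp : 1 < p) (hq : m + 2 ≤ q) (hpq : p * (q - m) = q) (hε : 0 < ε) :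
    ∃ C : ℝ, 0 < C ∧ ∀ (δ : ℝ) (g : E → ℝ≥0∞), 0 < δ → δ ≤ 1 →
      Measurable g → ∫⁻ y, g y ^ p ∂μ ≤ 1 →
      ∫⁻ x in K, nikodymMax μ δ g x ^ q ∂μ ≤
        ENNReal.ofReal (C * (δ ^ m) ^ (-(q - m - 1) - ε)) := by
  obtain ⟨C, hC, hstrong⟩ := exists_setLIntegral_nikodymMax_rpow_le hE hK hp hq hpq
  have hball := measureReal_unit_ball_pos μ
  have hq₀ : 0 < q + 2 := by linarith [m.cast_nonneg (α := ℝ)]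
  obtain ⟨B, hB, hL⟩ := exists_nat_two_pow_rpow_le (half_pos hball) hp (div_pos hε hq₀)
  refine ⟨C * B ^ (q + 2), by positivity, fun δ g hδ hδ1 hg hgp ↦ ?_⟩
  have hd : 0 < δ ^ m := by positivity
  obtain ⟨L, hlow, hup⟩ := hL (δ ^ m) hd (pow_le_one₀ hδ.le hδ1)
  refine (hstrong δ g L hδ hδ1 hg hgp hlow).trans (ofReal_le_ofReal ?_)
  calc C * (L + 1) ^ (q + 2) * (δ ^ m) ^ (-(q - m - 1))
      ≤ C * (B * (δ ^ m) ^ (-(ε / (q + 2)))) ^ (q + 2) * (δ ^ m) ^ (-(q - m - 1)) := by gcongr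
    _ = C * B ^ (q + 2) * ((δ ^ m) ^ (-ε) * (δ ^ m) ^ (-(q - m - 1))) := by
        rw [Real.mul_rpow hB.le (by positivity), ← Real.rpow_mul hd.le, neg_mul,
          div_mul_cancel₀ _ hq₀.ne']
        ring
    _ = C * B ^ (q + 2) * (δ ^ m) ^ (-(q - m - 1) - ε) := by
        rw [← Real.rpow_add hd, neg_add_eq_sub]

end StrongType

section Main

open Metric Module Set

theorem nikodym_exponent_relations {m p q : ℝ} (hp : 1 < p) (hpm : p ≤ (m + 2) / 2)
    (hq : q = m * p / (p - 1)) :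
    m + 2 ≤ q ∧ p * (q - m) = q ∧ m * (q - m - 1) = ((m + 1) / p - 1) * q := by
  have hp₁ : 0 < p - 1 := sub_pos.2 hp
  have hp₀ : 0 < p := by linarith
  have hqp : q * (p - 1) = m * p := by rw [hq, div_mul_cancel₀ _ hp₁.ne']
  refine ⟨?_, by linarith, ?_⟩
  · rw [hq, le_div_iff₀ hp₁]
    linarith
  · have hdiv : q / p = q - m := by rw [div_eq_iff hp₀.ne']; linarith
    linear_combination (-(m + 1)) * hdiv

theorem stmt_9_general {E : Type*} [NormedAddCommGroup E] [NormedSpace ℝ E]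
    [FiniteDimensional ℝ E] [MeasurableSpace E] [BorelSpace E] (μ : Measure E)
    [μ.IsAddHaarMeasure] {K : Set E} (hK : μ K ≠ ∞) {p q ε : ℝ} (hp : 1 < p)
    (hpE : p ≤ ((finrank ℝ E : ℝ) + 1) / 2) (hq : q = ((finrank ℝ E : ℝ) - 1) * p / (p - 1))
    (hε : 0 < ε) :
    ∃ C : ℝ, 0 < C ∧ ∀ δ ∈ Ioc (0 : ℝ) 1, ∀ g : E → ℝ≥0∞, Measurable g →
      (∫⁻ x in K, nikodymMax μ δ g x ^ q ∂μ) ^ (1 / q) ≤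
        ENNReal.ofReal (C * δ ^ (1 - finrank ℝ E / p - ε)) * (∫⁻ x, g x ^ p ∂μ) ^ (1 / p) := by
  obtain ⟨m, hE⟩ : ∃ m, finrank ℝ E = m + 1 :=
    Nat.exists_eq_succ_of_ne_zero fun h ↦ by rw [h] at hpE; norm_num at hpE; linarith
  rw [hE, Nat.cast_succ] at hpE hq ⊢
  obtain ⟨hqm, hpq, hexp⟩ : m + 2 ≤ q ∧ p * (q - m) = q ∧ m * (q - m - 1) = ((m + 1) / p - 1) * q :=
    nikodym_exponent_relations hp (by linarith) (by rwa [add_sub_cancel_right] at hq)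
  have hm : (0 : ℝ) < m := by linarith
  have hq₀ : 0 < q := by linarith
  obtain ⟨C, hC, hstrong⟩ := exists_setLIntegral_nikodymMax_rpow_le_of_lintegral_le_one hE hK hp
    hqm hpq (ε := ε * q / m) (by positivity)
  refine ⟨C ^ (1 / q), by positivity, fun δ ⟨hδ, hδ1⟩ g hg ↦
    lintegral_nikodymMax_rpow_le_mul_of_normalized (one_pos.trans hp) hq₀
      (ofReal_pos.2 (by positivity)).ne' ofReal_ne_top (fun g hg hgp ↦ ?_) hg⟩
  have hδpow : (δ ^ m) ^ (-(q - m - 1) - ε * q / m) = δ ^ ((1 - (m + 1) / p - ε) * q) := by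
    rw [← Real.rpow_natCast_mul hδ.le]
    congr 1
    field_simp at hexp ⊢
    linear_combination -hexp
  grw [hstrong δ g hδ hδ1 hg hgp]
  rw [ofReal_rpow_of_pos (by positivity), hδpow, Real.mul_rpow hC.le (by positivity),
    ← Real.rpow_mul hδ.le, mul_assoc _ q, mul_one_div_cancel hq₀.ne', mul_one]

theorem nikSeg_eq_segment {n : ℕ} (p e : EuclideanSpace ℝ (Fin n)) :
    nikSeg p e = segment ℝ p (p + e) := by
  rw [segment_eq_image', add_sub_cancel_left, nikSeg]

theorem nikTube_eq_cthickening {n : ℕ} {δ : ℝ} (hδ : 0 ≤ δ) (p e : EuclideanSpace ℝ (Fin n)) :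
    nikTube δ p e = cthickening δ (segment ℝ p (p + e)) := by
  ext y
  rw [nikTube, nikSeg_eq_segment, mem_ofPred_eq, mem_cthickening_iff, infDist,
    le_ofReal_iff_toReal_le (infEDist_ne_top ⟨p, left_mem_segment ℝ _ _⟩) hδ]

theorem nikMax_eq_nikodymMax {n : ℕ} {δ : ℝ} (hδ : 0 ≤ δ) (f : EuclideanSpace ℝ (Fin n) → ℝ) :
    nikMax δ f = nikodymMax volume δ fun y ↦ ENNReal.ofReal |f y| := by
  ext x
  rw [nikMax, nikodymMax]
  refine iSup_congr fun p ↦ (Equiv.addLeft p).iSup_congr fun e ↦ ?_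
  simp only [Equiv.coe_addLeft, dist_self_add_right, nikSeg_eq_segment,
    nikTube_eq_cthickening hδ, setLAverage_eq]

end Main

/-- the Euclidean instance of the Nikodym maximal theorem:
`‖M^δ f‖_{L^q(K)} ≤ C δ^{1-n/p-ε} ‖f‖_{L^p}` for `1 < p ≤ (n+1)/2`, `q = (n-1)p/(p-1)`,
`f` supported in the fixed compact set `K`. -/
theorem stmt_9 (n : ℕ) (hn : 2 ≤ n)
    (K : Set (EuclideanSpace ℝ (Fin n))) (hK : IsCompact K)
    (p q : ℝ) (hp1 : 1 < p) (hp2 : p ≤ ((n : ℝ) + 1)/2)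
    (hq : q = ((n : ℝ) - 1) * p / (p - 1)) (ε : ℝ) (hε : 0 < ε) :
    ∃ C : ℝ, 0 < C ∧
      ∀ δ : ℝ, δ ∈ Set.Ioc (0:ℝ) 1 →
        ∀ f : EuclideanSpace ℝ (Fin n) → ℝ, Measurable f → (∀ x, x ∉ K → f x = 0) →
          (∫⁻ x in K, (nikMax δ f x) ^ q) ^ (1/q) ≤
            ENNReal.ofReal (C * δ ^ (1 - (n : ℝ)/p - ε)) *
              (∫⁻ x, (ENNReal.ofReal |f x|) ^ p) ^ (1/p) := by
  obtain ⟨C, hC, hbound⟩ := stmt_9_general volume hK.measure_ne_top hp1 (by simpa using hp2)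
    (by simpa using hq) hε
  refine ⟨C, hC, fun δ hδ f hf _ ↦ ?_⟩
  rw [nikMax_eq_nikodymMax hδ.1.le]
  simpa only [finrank_euclideanSpace_fin] using hbound δ hδ _ hf.abs.ennreal_ofReal
end

section
/- Let n ≥ 2 and let Π ⊆ ℝⁿ be a bounded set. Define Π* to be the set of points x ∈ ℝⁿ for which there exist a unit vector e ∈ ℝⁿ and c ∈ [0,1] such that the one-dimensional Lebesgue measure of { s ∈ [0,1] : x + (s − c)·e ∈ Π } is positive (i.e., some line segment of length 1 containing x intersects Π in a set of positive length). If Π* has positive Lebesgue outer measure, then for every ε > 0 there is a constant c_ε > 0 such that for all δ ∈ (0,1], the Lebesgue measure of the open δ-neighborhood Π^δ = {y : dist(y, Π) < δ} satisfies vol(Π^δ) ≥ c_ε·δ^{(n−1)/2 + ε}. -/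
open MeasureTheory

/-! Let `Y` be a maximal `δ`-separated subset of `Π`, so that `#Y * δ ^ n ≲ |Π^δ|`. Let `x` lie on
a unit segment that meets `Π` in length at least `λ`. That segment passes within `δ` of `≳ λ / δ`
points of `Y`; fix one of them, and `≳ λ / δ` of the others are met at distance `≳ λ` from it. For
each of these `≳ (λ / δ) ^ 2` pairs, extrapolating the line through the two net points by a factor
`≲ 1 / λ` reaches a point within `≲ δ / λ` of `x`. Hence `x` lies in a tube of length `≲ 1 / λ` and
radius `≲ δ / λ` around that line, whose volume is `≲ δ ^ (n - 1) / λ ^ n`. At most `(#Y) ^ 2`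
tubes occur, so integrating their multiplicity over the set `A` of these `x` gives
`(λ / δ) ^ 2 * |A| ≲ (#Y) ^ 2 * δ ^ (n - 1) / λ ^ n`, that is `|A| * δ ^ (n - 1) ≲ |Π^δ| ^ 2` for
fixed `λ`. If `Π*` has positive outer measure, so has `A` for some `λ > 0`. -/

open Metric Module Set
open scoped ENNReal NNReal Finset

section Packing

theorem exists_isSeparated_isCover {X : Type*} [PseudoEMetricSpace X] (ε : ℝ≥0) (s : Set X) :
    ∃ N ⊆ s, IsSeparated ε N ∧ IsCover ε s N := by
  obtain ⟨N, hN⟩ := zorn_subset {N | N ⊆ s ∧ IsSeparated ε N} fun c hc hchain ↦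
    ⟨⋃₀ c, ⟨sUnion_subset fun N hN ↦ (hc hN).1,
      (pairwise_sUnion hchain.directedOn).2 fun N hN ↦ (hc hN).2⟩, fun _ ↦ subset_sUnion_of_mem⟩
  exact ⟨N, hN.prop.1, hN.prop.2, .of_maximal_isSeparated hN⟩

variable {E : Type*} [NormedAddCommGroup E] [MeasurableSpace E] [BorelSpace E]
  (μ : Measure E) [μ.IsAddHaarMeasure] {ε : ℝ≥0} {s : Set E}

theorem encard_mul_measure_ball_le_of_isSeparated {N : Set E} (hNs : N ⊆ s)
    (hN : IsSeparated ε N) :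
    N.encard * μ (ball 0 (ε / 2)) ≤ μ (thickening (ε / 2) s) := by
  have disjoint_balls : Pairwise (Function.onFun Disjoint fun y : N ↦ ball (y : E) (ε / 2)) := by
    intro y z hyz
    have hlt : (ε : ℝ≥0∞) < edist (y : E) z := hN y.2 z.2 (Subtype.coe_ne_coe.2 hyz)
    rw [edist_nndist, ENNReal.coe_lt_coe, ← NNReal.coe_lt_coe, coe_nndist] at hlt
    exact ball_disjoint_ball (by linarith)
  calc N.encard * μ (ball 0 (ε / 2)) = ∑' y : N, μ (ball (y : E) (ε / 2)) := by
        simp_rw [Measure.addHaar_ball_center, ENNReal.tsum_set_const]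
    _ ≤ μ (⋃ y : N, ball (y : E) (ε / 2)) :=
        tsum_meas_le_meas_iUnion_of_disjoint μ (fun _ ↦ measurableSet_ball) disjoint_balls
    _ ≤ μ (thickening (ε / 2) s) :=
        measure_mono (iUnion_subset fun y ↦ ball_subset_thickening (hNs y.2) _)

theorem exists_finset_isCover_card_mul_measure_ball_le (hε : 0 < ε)
    (hs : μ (thickening (ε / 2) s) ≠ ∞) :
    ∃ N : Finset E, IsCover ε s N ∧ #N * μ (ball 0 (ε / 2)) ≤ μ (thickening (ε / 2) s) := by
  obtain ⟨N, hNs, hsep, hcover⟩ := exists_isSeparated_isCover ε s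
  have hcard := encard_mul_measure_ball_le_of_isSeparated μ hNs hsep
  have hball : μ (ball 0 (ε / 2)) ≠ 0 := (measure_ball_pos μ 0 (by positivity)).ne'
  have hfin : N.Finite := by
    by_contra hinf
    rw [Set.not_finite.mp hinf |>.encard_eq, ENat.toENNReal_top, ENNReal.top_mul hball] at hcard
    exact hs (top_le_iff.1 hcard)
  lift N to Finset E using hfin
  exact ⟨N, hcover, by simpa using hcard⟩

end Packing

theorem mul_measure_le_sum_measure {α ι : Type*} [MeasurableSpace α] {μ : Measure α}
    {I : Finset ι} {B : ι → Set α} [∀ x, DecidablePred fun i ↦ x ∈ B i]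
    (hB : ∀ i ∈ I, MeasurableSet (B i))
    {A : Set α} {m : ℝ≥0∞} (hA : ∀ x ∈ A, m ≤ #{i ∈ I | x ∈ B i}) :
    m * μ A ≤ ∑ i ∈ I, μ (B i) := by
  have multiplicity (x : α) : (#{i ∈ I | x ∈ B i} : ℝ≥0∞) = ∑ i ∈ I, (B i).indicator 1 x := by
    simp [indicator_apply]
  have hmeas : ∀ i ∈ I, Measurable ((B i).indicator (1 : α → ℝ≥0∞)) :=
    fun i hi ↦ measurable_one.indicator (hB i hi)
  calc m * μ A ≤ m * μ {x | m ≤ ∑ i ∈ I, (B i).indicator 1 x} := by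
        gcongr
        exact fun x hx ↦ (hA x hx).trans_eq (multiplicity x)
    _ ≤ ∫⁻ x, ∑ i ∈ I, (B i).indicator 1 x ∂μ :=
        mul_meas_ge_le_lintegral (Finset.measurable_fun_sum I hmeas) m
    _ = ∑ i ∈ I, μ (B i) := by
        rw [lintegral_finsetSum I hmeas]
        exact Finset.sum_congr rfl fun i hi ↦ lintegral_indicator_one (hB i hi)

section Counting

open scoped Classical in
theorem volume_le_card_mul_of_antilipschitzWith {X : Type*} [PseudoEMetricSpace X] {K δ : ℝ≥0}
    {γ : ℝ → X} (hγ : AntilipschitzWith K γ) {T : Set ℝ} {Y : Finset X}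
    (hY : IsCover δ (γ '' T) Y) :
    volume T ≤ #{y ∈ Y | ∃ t ∈ T, edist (γ t) y ≤ δ} * (K * (2 * δ)) := by
  set Z := {y ∈ Y | ∃ t ∈ T, edist (γ t) y ≤ δ}
  have covered : T ⊆ ⋃ y ∈ Z, γ ⁻¹' closedEBall y δ := by
    intro t ht
    obtain ⟨y, hy, hty⟩ := hY (mem_image_of_mem γ ht)
    exact mem_biUnion (Finset.mem_filter.2 ⟨hy, t, ht, hty⟩) hty
  calc volume T ≤ volume (⋃ y ∈ Z, γ ⁻¹' closedEBall y δ) := measure_mono covered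
    _ ≤ ∑ y ∈ Z, volume (γ ⁻¹' closedEBall y δ) := measure_biUnion_finset_le _ _
    _ ≤ ∑ _y ∈ Z, (K * (2 * δ) : ℝ≥0∞) := by
        refine Finset.sum_le_sum fun y _ ↦ ?_
        exact (Real.volume_le_diam _).trans <| (hγ.ediam_preimage_le _).trans <| by
          gcongr; exact ediam_closedEBall_le
    _ = #Z * (K * (2 * δ)) := by rw [Finset.sum_const, nsmul_eq_mul]

theorem two_mul_le_volume_diff_ball {T : Set ℝ} {r : ℝ≥0} (hT : 4 * r ≤ volume T) (t : ℝ) :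
    2 * r ≤ volume (T \ ball t r) := by
  have hball : volume (ball t r) = 2 * r := by
    rw [Real.volume_ball, ENNReal.ofReal_mul zero_le_two, ENNReal.ofReal_coe_nnreal,
      ENNReal.ofReal_ofNat]
  have hsplit : (2 * r + 2 * r : ℝ≥0∞) ≤ volume (T \ ball t r) + 2 * r := by
    calc (2 * r + 2 * r : ℝ≥0∞) = 4 * r := by ring
      _ ≤ volume T := hT
      _ ≤ volume (T \ ball t r) + volume (ball t r) :=
          tsub_le_iff_right.1 le_measure_sdiff
      _ = volume (T \ ball t r) + 2 * r := by rw [hball]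
  exact (ENNReal.add_le_add_iff_right (by finiteness)).1 hsplit

open scoped Classical in
theorem le_card_far_mul {X : Type*} [PseudoEMetricSpace X] {K δ r : ℝ≥0} {γ : ℝ → X}
    (hγ : AntilipschitzWith K γ) {T : Set ℝ} (hT : 4 * r ≤ volume T) {Y : Finset X}
    (hY : IsCover δ (γ '' T) Y) (s : ℝ) :
    r ≤ #{y ∈ Y | ∃ t ∈ T, r ≤ dist s t ∧ edist (γ t) y ≤ δ} * (K * δ) := by
  have hfar := (two_mul_le_volume_diff_ball hT s).trans <|
    volume_le_card_mul_of_antilipschitzWith hγ (hY.anti (image_mono sdiff_subset))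
  simp only [mem_sdiff, mem_ball, not_lt, and_assoc, dist_comm _ s] at hfar
  norm_cast at hfar
  linarith

open scoped Classical in
theorem two_mul_sq_le_card_separated_pairs {X : Type*} [PseudoEMetricSpace X] {K δ r : ℝ≥0}
    {γ : ℝ → X} (hγ : AntilipschitzWith K γ) {T : Set ℝ} (hT : 4 * r ≤ volume T) {Y : Finset X}
    (hY : IsCover δ (γ '' T) Y) :
    2 * (r / (K * δ)) ^ 2 ≤ (#{p ∈ Y ×ˢ Y | ∃ s ∈ T, ∃ t ∈ T, r ≤ dist s t ∧
      edist (γ s) p.1 ≤ δ ∧ edist (γ t) p.2 ≤ δ} : ℝ≥0) := by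
  set Z := {y ∈ Y | ∃ s ∈ T, edist (γ s) y ≤ δ}
  set W := {p ∈ Y ×ˢ Y | ∃ s ∈ T, ∃ t ∈ T, r ≤ dist s t ∧
      edist (γ s) p.1 ≤ δ ∧ edist (γ t) p.2 ≤ δ}
  have card_first : 2 * r ≤ #Z * (K * δ) := by
    have hnear := hT.trans (volume_le_card_mul_of_antilipschitzWith hγ hY)
    norm_cast at hnear
    linarith
  have card_second : ∀ y ∈ Z, r ≤ #{p ∈ W | p.1 = y} * (K * δ) := by
    intro y hy
    obtain ⟨hyY, s, hs, hsy⟩ := Finset.mem_filter.1 hy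
    refine (le_card_far_mul hγ hT hY s).trans ?_
    gcongr
    refine Finset.card_le_card_of_injOn (y, ·) (fun y' hy' ↦ ?_) (Prod.mk_right_injective y).injOn
    obtain ⟨hy'Y, t, ht, hst, hty'⟩ := Finset.mem_filter.1 hy'
    exact Finset.mem_filter.2 ⟨Finset.mem_filter.2
      ⟨Finset.mk_mem_product hyY hy'Y, s, hs, t, ht, hst, hsy, hty'⟩, rfl⟩
  have fst_mem : ∀ p ∈ W, p.1 ∈ Z := by
    intro p hp
    obtain ⟨hpY, s, hs, -, -, -, hsp, -⟩ := Finset.mem_filter.1 hp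
    exact Finset.mem_filter.2 ⟨(Finset.mem_product.1 hpY).1, s, hs, hsp⟩
  have card_pairs : 2 * r ^ 2 ≤ #W * (K * δ) ^ 2 := by
    calc 2 * r ^ 2 = 2 * r * r := by ring
      _ ≤ #Z * (K * δ) * r := by gcongr
      _ = (∑ _y ∈ Z, r) * (K * δ) := by rw [Finset.sum_const, nsmul_eq_mul]; ring
      _ ≤ (∑ y ∈ Z, #{p ∈ W | p.1 = y} * (K * δ)) * (K * δ) := by
          gcongr with y hy; exact card_second y hy
      _ = #W * (K * δ) ^ 2 := by
          rw [← Finset.sum_mul, ← Nat.cast_sum, ← Finset.card_eq_sum_card_fiberwise fst_mem]; ring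
  rw [div_pow, ← mul_div_assoc]
  exact div_le_of_le_mul₀ (by positivity) (by positivity) card_pairs

end Counting

section Tube

variable {E : Type*} [NormedAddCommGroup E] [NormedSpace ℝ E]

theorem thickening_segment_subset_biUnion_ball {u v : E} {r : ℝ} {N : ℕ}
    (hN : dist u v < r * N) :
    thickening r (segment ℝ u v) ⊆
      ⋃ k ∈ Finset.range (N + 1), ball (AffineMap.lineMap u v ((k : ℝ) / N)) (2 * r) := by
  intro z hz
  obtain ⟨w, hw, hzw⟩ := mem_thickening_iff.1 hz
  rw [segment_eq_image_lineMap] at hw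
  obtain ⟨a, ⟨ha0, ha1⟩, rfl⟩ := hw
  have hr : 0 < r := dist_nonneg.trans_lt hzw
  have hN0 : (0 : ℝ) < N := pos_of_mul_pos_right (dist_nonneg.trans_lt hN) hr.le
  have floor_le : (⌊a * N⌋₊ : ℝ) ≤ a * N := Nat.floor_le (by positivity)
  have lt_floor : a * N < ⌊a * N⌋₊ + 1 := Nat.lt_floor_add_one _
  have floor_le_N : ⌊a * N⌋₊ ≤ N := by
    exact_mod_cast floor_le.trans (mul_le_of_le_one_left hN0.le ha1)
  have dist_param : dist a (⌊a * N⌋₊ / N) ≤ 1 / N := by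
    rw [Real.dist_eq, abs_of_nonneg (sub_nonneg.2 ((div_le_iff₀ hN0).2 floor_le)),
      sub_le_iff_le_add, ← add_div, le_div_iff₀ hN0]
    linarith
  have dist_center : dist (AffineMap.lineMap u v a)
      (AffineMap.lineMap u v ((⌊a * N⌋₊ : ℝ) / N)) < r := by
    rw [dist_lineMap_lineMap]
    calc dist a (⌊a * N⌋₊ / N) * dist u v ≤ 1 / N * dist u v := by gcongr
      _ < r := by rwa [one_div_mul_eq_div, div_lt_iff₀ hN0]
  exact mem_biUnion (Finset.mem_range_succ_iff.2 floor_le_N)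
    ((dist_triangle _ _ _).trans_lt ((add_lt_add hzw dist_center).trans_eq (two_mul r).symm))

theorem measure_thickening_segment_le [MeasurableSpace E] [BorelSpace E] (μ : Measure E)
    [μ.IsAddHaarMeasure] (u v : E) {r : ℝ} (hr : 0 < r) :
    μ (thickening r (segment ℝ u v)) ≤
      ENNReal.ofReal (dist u v / r + 2) * μ (ball 0 (2 * r)) := by
  set N := ⌊dist u v / r⌋₊ + 1
  have hN : dist u v < r * N := by
    rw [mul_comm, ← div_lt_iff₀ hr]
    exact_mod_cast Nat.lt_floor_add_one _
  have hNle : (↑(N + 1) : ℝ) ≤ dist u v / r + 2 := by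
    have floor_le := Nat.floor_le (show 0 ≤ dist u v / r by positivity)
    push_cast [N]
    linarith
  calc μ (thickening r (segment ℝ u v))
      ≤ ∑ k ∈ Finset.range (N + 1),
          μ (ball (AffineMap.lineMap u v ((k : ℝ) / N)) (2 * r)) :=
        (measure_mono (thickening_segment_subset_biUnion_ball hN)).trans
          (measure_biUnion_finset_le _ _)
    _ = ENNReal.ofReal ↑(N + 1) * μ (ball 0 (2 * r)) := by
        simp only [Measure.addHaar_ball_center, Finset.sum_const, Finset.card_range, nsmul_eq_mul,
          ENNReal.ofReal_natCast]
    _ ≤ ENNReal.ofReal (dist u v / r + 2) * μ (ball 0 (2 * r)) := by gcongr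

/-- The `r`-neighbourhood of the piece of the line through `y` and `z` with affine parameters in
`[-ρ, ρ]`, where `y` has parameter `0` and `z` has parameter `1`. -/
def tube (y z : E) (ρ r : ℝ) : Set E :=
  thickening r (segment ℝ (AffineMap.lineMap y z (-ρ)) (AffineMap.lineMap y z ρ))

theorem lineMap_mem_segment_lineMap {y z : E} {a ρ : ℝ} (ha : |a| ≤ ρ) :
    AffineMap.lineMap y z a ∈
      segment ℝ (AffineMap.lineMap y z (-ρ)) (AffineMap.lineMap y z ρ) := by
  rw [← image_segment, segment_eq_Icc (by linarith [abs_nonneg a])]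
  exact mem_image_of_mem _ (abs_le.1 ha)

theorem dist_lineMap_lineMap_le (p p' q q' : E) (a : ℝ) :
    dist (AffineMap.lineMap p p' a) (AffineMap.lineMap q q' a) ≤
      |1 - a| * dist p q + |a| * dist p' q' := by
  simp_rw [AffineMap.lineMap_apply_module, dist_eq_norm]
  calc ‖(1 - a) • p + a • p' - ((1 - a) • q + a • q')‖
      = ‖(1 - a) • (p - q) + a • (p' - q')‖ := by congr 1; module
    _ ≤ ‖(1 - a) • (p - q)‖ + ‖a • (p' - q')‖ := norm_add_le _ _
    _ = |1 - a| * ‖p - q‖ + |a| * ‖p' - q'‖ := by simp only [norm_smul, Real.norm_eq_abs]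

theorem mem_tube_of_dist_le {x e y z : E} {δ r s t : ℝ} (hδ : 0 < δ) (hr : 0 < r)
    (hs : |s| ≤ 1) (ht : |t| ≤ 1) (hst : r ≤ dist s t) (hy : dist (x + s • e) y ≤ δ)
    (hz : dist (x + t • e) z ≤ δ) : x ∈ tube y z (1 / r) (4 * (1 / r) * δ) := by
  rw [dist_comm, Real.dist_eq] at hst
  have hne : t - s ≠ 0 := abs_pos.1 (hr.trans_le hst)
  set a := -s / (t - s) with ha
  have ha' : 1 - a = t / (t - s) := by rw [ha]; field_simp; ring
  have abs_a_le : |a| ≤ 1 / r := by rw [ha, abs_div, abs_neg]; gcongr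
  have abs_one_sub_a_le : |1 - a| ≤ 1 / r := by rw [ha', abs_div]; gcongr
  have hx : AffineMap.lineMap (x + s • e) (x + t • e) a = x := by
    have hzero : (1 - a) * s + a * t = 0 := by rw [ha', ha]; field_simp; ring
    calc AffineMap.lineMap (x + s • e) (x + t • e) a = x + ((1 - a) * s + a * t) • e := by
          rw [AffineMap.lineMap_apply_module]; module
      _ = x := by rw [hzero, zero_smul, add_zero]
  refine mem_thickening_iff.2 ⟨_, lineMap_mem_segment_lineMap abs_a_le, ?_⟩
  calc dist x (AffineMap.lineMap y z a)
      ≤ |1 - a| * dist (x + s • e) y + |a| * dist (x + t • e) z := by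
        simpa only [hx] using dist_lineMap_lineMap_le (x + s • e) (x + t • e) y z a
    _ ≤ 1 / r * δ + 1 / r * δ := by gcongr
    _ < 4 * (1 / r) * δ := by linarith [show 0 < 1 / r * δ by positivity]

theorem measure_tube_le [FiniteDimensional ℝ E] [MeasurableSpace E] [BorelSpace E]
    (μ : Measure E) [μ.IsAddHaarMeasure] {y z : E} {δ ρ : ℝ} (hδ : 0 < δ) (hδ1 : δ ≤ 1)
    (hρ : 0 < ρ) (hyz : dist y z ≤ 4) :
    μ (tube y z ρ (4 * ρ * δ)) ≤
      ENNReal.ofReal (4 / δ * (16 * ρ) ^ finrank ℝ E) * μ (ball 0 (δ / 2)) := by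
  have hcount : dist (AffineMap.lineMap y z (-ρ)) (AffineMap.lineMap y z ρ) / (4 * ρ * δ) + 2 ≤
      4 / δ := by
    rw [dist_lineMap_lineMap, Real.dist_eq, abs_of_neg (by linarith)]
    calc -(-ρ - ρ) * dist y z / (4 * ρ * δ) + 2 ≤ -(-ρ - ρ) * 4 / (4 * ρ * δ) + 2 / δ := by
          gcongr
          · linarith
          · exact (le_div_iff₀ hδ).2 (by linarith)
      _ = 4 / δ := by field_simp; norm_num
  calc μ (tube y z ρ (4 * ρ * δ))
      ≤ ENNReal.ofReal (4 / δ) * μ (ball 0 (2 * (4 * ρ * δ))) :=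
        (measure_thickening_segment_le μ _ _ (by positivity)).trans (by gcongr)
    _ = ENNReal.ofReal (4 / δ) * μ (ball 0 (16 * ρ * (δ / 2))) := by congr 3; ring
    _ = _ := by
        rw [Measure.addHaar_ball_mul_of_pos μ 0 (by positivity), ← mul_assoc,
          ENNReal.ofReal_mul (by positivity)]

end Tube

section Nikodym

variable {E : Type*} [NormedAddCommGroup E] [NormedSpace ℝ E]

/-- The set `Π*` of points lying on a unit segment that meets `Π` in positive length. -/
def nikodymSet (P : Set E) : Set E :=
  {x | ∃ e : E, ‖e‖ = 1 ∧ ∃ c ∈ Icc (0 : ℝ) 1,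
    0 < volume {s ∈ Icc (0 : ℝ) 1 | x + (s - c) • e ∈ P}}

/-- The points lying on a unit segment that meets `Π` in length at least `lam`: up to attainment of
the supremum, a superlevel set of the Nikodym maximal function of the indicator of `Π`. -/
def nikodymLevel (P : Set E) (lam : ℝ≥0∞) : Set E :=
  {x | ∃ e : E, ‖e‖ = 1 ∧ ∃ c ∈ Icc (0 : ℝ) 1,
    lam ≤ volume {s ∈ Icc (0 : ℝ) 1 | x + (s - c) • e ∈ P}}

theorem nikodymSet_subset_iUnion_nikodymLevel (P : Set E) :
    nikodymSet P ⊆ ⋃ k : ℕ, nikodymLevel P ↑(1 / (k + 1) : ℝ≥0) := by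
  rintro x ⟨e, he, c, hc, hvol⟩
  obtain ⟨lam, hlam0, hlam⟩ := ENNReal.lt_iff_exists_nnreal_btwn.1 hvol
  obtain ⟨k, hk⟩ := exists_nat_one_div_lt (ENNReal.coe_pos.1 hlam0)
  exact mem_iUnion.2 ⟨k, e, he, c, hc, (ENNReal.coe_le_coe.2 hk.le).trans hlam.le⟩

theorem exists_pos_measure_nikodymLevel_pos [MeasurableSpace E] {μ : Measure E} {P : Set E}
    (hP : 0 < μ (nikodymSet P)) : ∃ lam : ℝ≥0, 0 < lam ∧ 0 < μ (nikodymLevel P lam) := by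
  obtain ⟨k, hk⟩ := exists_measure_pos_of_not_measure_iUnion_null
    (hP.trans_le (measure_mono (nikodymSet_subset_iUnion_nikodymLevel P))).ne'
  exact ⟨_, by positivity, hk⟩

open scoped Classical in
theorem two_mul_sq_le_card_tubes_of_mem_nikodymLevel {P : Set E} {δ r : ℝ≥0} (hδ : 0 < δ)
    (hδ1 : δ ≤ 1) (hr : 0 < r) {Y : Finset E} (hY : IsCover δ P Y) {x : E}
    (hx : x ∈ nikodymLevel P (4 * r)) :
    2 * (r / δ) ^ 2 ≤
      (#{p ∈ {p ∈ Y ×ˢ Y | dist p.1 p.2 ≤ 4} | x ∈ tube p.1 p.2 (1 / r) (4 * (1 / r) * δ)} :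
        ℝ≥0) := by
  obtain ⟨e, he, c, hc, hT⟩ := hx
  set T := {s ∈ Icc (0 : ℝ) 1 | x + (s - c) • e ∈ P}
  have hγ : Isometry fun s : ℝ ↦ x + (s - c) • e := Isometry.of_dist_eq fun s t ↦ by
    rw [dist_add_left, dist_eq_norm, ← sub_smul, norm_smul, he, mul_one, sub_sub_sub_cancel_right,
      ← dist_eq_norm]
  have hTY : IsCover δ ((fun s : ℝ ↦ x + (s - c) • e) '' T) Y :=
    hY.anti (image_subset_iff.2 fun s hs ↦ hs.2)
  have abs_sub_le : ∀ a ∈ Icc (0 : ℝ) 1, ∀ b ∈ Icc (0 : ℝ) 1, |a - b| ≤ 1 := fun a ha b hb ↦ by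
    simpa using abs_sub_le_of_le_of_le ha.1 ha.2 hb.1 hb.2
  have hpairs := two_mul_sq_le_card_separated_pairs hγ.antilipschitz hT hTY
  rw [one_mul] at hpairs
  refine hpairs.trans ?_
  gcongr
  rintro ⟨y, z⟩ hyz
  obtain ⟨hmem, s, hs, t, ht, hst, hy, hz⟩ := Finset.mem_filter.1 hyz
  simp only [edist_le_coe, ← NNReal.coe_le_coe, coe_nndist] at hy hz
  have dist_le : dist y z ≤ 4 := by
    have hxst := (hγ.dist_eq s t).trans_le (abs_sub_le s hs.1 t ht.1)
    have hδ1' : (δ : ℝ) ≤ 1 := hδ1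
    rw [dist_comm] at hy
    linarith [dist_triangle4 y (x + (s - c) • e) (x + (t - c) • e) z]
  have hx_tube : x ∈ tube y z (1 / r) (4 * (1 / r) * δ) :=
    mem_tube_of_dist_le hδ hr (abs_sub_le s hs.1 c hc) (abs_sub_le t ht.1 c hc)
      (by rwa [dist_sub_right]) hy hz
  exact Finset.mem_filter.2 ⟨Finset.mem_filter.2 ⟨hmem, dist_le⟩, hx_tube⟩

theorem sum_measure_tube_le [FiniteDimensional ℝ E] [MeasurableSpace E] [BorelSpace E]
    (μ : Measure E) [μ.IsAddHaarMeasure] {δ ρ : ℝ≥0} (hδ : 0 < δ) (hδ1 : δ ≤ 1) (hρ : 0 < ρ)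
    (Y : Finset E) :
    ∑ p ∈ Y ×ˢ Y with dist p.1 p.2 ≤ 4, μ (tube p.1 p.2 ρ (4 * ρ * δ)) ≤
      #Y ^ 2 * ((4 / δ * (16 * ρ) ^ finrank ℝ E : ℝ≥0) * μ (ball 0 (δ / 2))) := by
  set I := {p ∈ Y ×ˢ Y | dist p.1 p.2 ≤ 4}
  have card_le : #I ≤ #Y ^ 2 := by
    rw [sq, ← Finset.card_product]
    exact Finset.card_filter_le _ _
  calc ∑ p ∈ I, μ (tube p.1 p.2 ρ (4 * ρ * δ))
      ≤ ∑ _p ∈ I, (4 / δ * (16 * ρ) ^ finrank ℝ E : ℝ≥0) * μ (ball 0 (δ / 2)) := by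
        refine Finset.sum_le_sum fun p hp ↦ ?_
        rw [← ENNReal.ofReal_coe_nnreal]
        exact_mod_cast measure_tube_le μ hδ hδ1 hρ (Finset.mem_filter.1 hp).2
    _ = #I * ((4 / δ * (16 * ρ) ^ finrank ℝ E : ℝ≥0) * μ (ball 0 (δ / 2))) := by
        rw [Finset.sum_const, nsmul_eq_mul]
    _ ≤ #Y ^ 2 * ((4 / δ * (16 * ρ) ^ finrank ℝ E : ℝ≥0) * μ (ball 0 (δ / 2))) := by
        gcongr
        exact_mod_cast card_le

theorem sq_mul_measure_nikodymLevel_mul_le [FiniteDimensional ℝ E] [MeasurableSpace E]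
    [BorelSpace E] (μ : Measure E) [μ.IsAddHaarMeasure] (P : Set E) {δ r : ℝ≥0} (hδ : 0 < δ)
    (hδ1 : δ ≤ 1) (hr : 0 < r) :
    r ^ 2 * μ (nikodymLevel P (4 * r)) * μ (ball 0 (δ / 2)) ≤
      (2 * (16 / r) ^ finrank ℝ E : ℝ≥0) * (δ * μ (thickening (δ / 2) P) ^ 2) := by
  classical
  by_cases hP : μ (thickening (δ / 2) P) = ∞
  · simp [hP, hδ.ne', hr.ne']
  obtain ⟨Y, hYcover, hYcard⟩ := exists_finset_isCover_card_mul_measure_ball_le μ hδ hP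
  set q := μ (ball 0 (δ / 2))
  set C : ℝ≥0 := (16 / r) ^ finrank ℝ E with hC
  have incidences : (2 * (r / δ) ^ 2 : ℝ≥0) * μ (nikodymLevel P (4 * r)) ≤
      #Y ^ 2 * ((4 / δ * C : ℝ≥0) * q) := by
    rw [hC, ← mul_one_div 16 r]
    exact (mul_measure_le_sum_measure (fun p _ ↦ isOpen_thickening.measurableSet) fun x hx ↦ by
      exact_mod_cast two_mul_sq_le_card_tubes_of_mem_nikodymLevel hδ hδ1 hr hYcover hx).trans <|
        sum_measure_tube_le μ hδ hδ1 (one_div_pos.2 hr) Y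
  calc r ^ 2 * μ (nikodymLevel P (4 * r)) * q
      = (δ ^ 2 / 2 : ℝ≥0) * ((2 * (r / δ) ^ 2 : ℝ≥0) * μ (nikodymLevel P (4 * r))) * q := by
        rw [← mul_assoc (_ : ℝ≥0∞), ← ENNReal.coe_mul, ← ENNReal.coe_pow]
        congr 3
        field_simp
    _ ≤ (δ ^ 2 / 2 : ℝ≥0) * (#Y ^ 2 * ((4 / δ * C : ℝ≥0) * q)) * q := by
        gcongr _ * ?_ * _
    _ = (δ ^ 2 / 2 * (4 / δ * C) : ℝ≥0) * (#Y * q) ^ 2 := by push_cast; ring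
    _ ≤ (δ ^ 2 / 2 * (4 / δ * C) : ℝ≥0) * μ (thickening (δ / 2) P) ^ 2 := by gcongr
    _ = (2 * C : ℝ≥0) * (δ * μ (thickening (δ / 2) P) ^ 2) := by
        rw [← mul_assoc (_ : ℝ≥0∞), ← ENNReal.coe_mul]
        congr 2
        field_simp
        norm_num

theorem exists_mul_pow_le_mul_measure_thickening_sq [FiniteDimensional ℝ E] [MeasurableSpace E]
    [BorelSpace E] (μ : Measure E) [μ.IsAddHaarMeasure] {P : Set E} (hP : 0 < μ (nikodymSet P)) :
    ∃ K : ℝ≥0, 0 < K ∧ ∀ δ : ℝ≥0, 0 < δ → δ ≤ 1 →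
      K * δ ^ finrank ℝ E ≤ δ * μ (thickening (δ / 2) P) ^ 2 := by
  obtain ⟨lam, hlam, hlevel⟩ := exists_pos_measure_nikodymLevel_pos hP
  obtain ⟨m, hm0, hm⟩ := ENNReal.lt_iff_exists_nnreal_btwn.1 hlevel
  obtain ⟨w, hw0, hw⟩ := ENNReal.lt_iff_exists_nnreal_btwn.1 (measure_ball_pos μ 0 one_pos)
  rw [ENNReal.coe_pos] at hm0 hw0
  obtain ⟨r, rfl⟩ : ∃ r, lam = 4 * r := ⟨lam / 4, by field_simp⟩
  have hr : 0 < r := pos_of_mul_pos_right hlam zero_le_four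
  set b : ℝ≥0 := 2 * (16 / r) ^ finrank ℝ E
  refine ⟨r ^ 2 * m * w / 2 ^ finrank ℝ E / b, by positivity, fun δ hδ hδ1 ↦ ?_⟩
  have ball_le : ((δ / 2) ^ finrank ℝ E * w : ℝ≥0) ≤ μ (ball 0 (δ / 2)) := by
    rw [Measure.addHaar_ball_of_pos μ 0 (by positivity), ENNReal.coe_mul,
      ← ENNReal.ofReal_coe_nnreal]
    push_cast
    gcongr
  have ineq := calc ((r ^ 2 * m * w / 2 ^ finrank ℝ E * δ ^ finrank ℝ E : ℝ≥0) : ℝ≥0∞)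
      = (r ^ 2 * m * ((δ / 2) ^ finrank ℝ E * w) : ℝ≥0) := by rw [div_pow]; congr 1; ring
    _ = r ^ 2 * m * ((δ / 2) ^ finrank ℝ E * w : ℝ≥0) := by push_cast; rfl
    _ ≤ r ^ 2 * μ (nikodymLevel P (4 * r)) * μ (ball 0 (δ / 2)) := by
        gcongr; exact_mod_cast hm.le
    _ ≤ b * (δ * μ (thickening (δ / 2) P) ^ 2) :=
        sq_mul_measure_nikodymLevel_mul_le μ P hδ hδ1 hr
  have hb : b ≠ 0 := by positivity
  rw [← ENNReal.coe_pow, ← ENNReal.coe_mul, div_mul_eq_mul_div, ENNReal.coe_div hb]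
  exact ENNReal.div_le_of_le_mul' ineq

theorem ofReal_sqrt_mul_rpow_le_of_mul_pow_le {K δ : ℝ≥0} {V : ℝ≥0∞} {n : ℕ} (hδ : 0 < δ)
    (h : K * δ ^ n ≤ δ * V ^ 2) : ENNReal.ofReal (√K * δ ^ (((n : ℝ) - 1) / 2)) ≤ V := by
  rcases eq_or_ne V ∞ with rfl | hV
  · exact le_top
  lift V to ℝ≥0 using hV
  have hδ0 : (0 : ℝ) < δ := hδ
  have hreal : (K * δ ^ n : ℝ) ≤ δ * V ^ 2 := by exact_mod_cast h
  have sq_rpow : ((δ : ℝ) ^ (((n : ℝ) - 1) / 2)) ^ 2 = δ ^ n / δ := by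
    rw [← Real.rpow_natCast, ← Real.rpow_mul hδ0.le, Nat.cast_ofNat, div_mul_cancel₀ _ two_ne_zero,
      Real.rpow_sub_one hδ0.ne', Real.rpow_natCast]
  refine ENNReal.ofReal_le_of_le_toReal (le_of_sq_le_sq ?_ V.coe_nonneg)
  rwa [mul_pow, Real.sq_sqrt K.coe_nonneg, sq_rpow, mul_div_assoc', div_le_iff₀ hδ0,
    mul_comm _ (δ : ℝ)]

theorem stmt_12_general [FiniteDimensional ℝ E] [MeasurableSpace E] [BorelSpace E] (μ : Measure E)
    [μ.IsAddHaarMeasure] (P : Set E) (hP : 0 < μ (nikodymSet P)) :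
    ∃ c : ℝ, 0 < c ∧ ∀ δ ∈ Ioc (0 : ℝ) 1,
      ENNReal.ofReal (c * δ ^ (((finrank ℝ E : ℝ) - 1) / 2)) ≤ μ (thickening δ P) := by
  obtain ⟨K, hK, hvol⟩ := exists_mul_pow_le_mul_measure_thickening_sq μ hP
  refine ⟨√K, by positivity, fun δ ⟨hδ, hδ1⟩ ↦ ?_⟩
  lift δ to ℝ≥0 using hδ.le
  calc ENNReal.ofReal (√K * δ ^ (((finrank ℝ E : ℝ) - 1) / 2))
      ≤ μ (thickening (δ / 2) P) := ofReal_sqrt_mul_rpow_le_of_mul_pow_le hδ (hvol δ hδ hδ1)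
    _ ≤ μ (thickening δ P) := measure_mono (thickening_mono (half_le_self hδ.le) P)

end Nikodym

/-- every Nikodym-type set has lower Minkowski dimension at least `(n+1)/2`:
if the set `Π*` of points lying on some unit segment meeting the bounded set `Π` in a set
of positive length has positive (outer) measure, then for every `ε > 0` the volume of the
`δ`-neighborhood of `Π` is at least `c_ε δ^{(n-1)/2+ε}` for all `δ ∈ (0,1]`. -/
theorem stmt_12 (n : ℕ) (hn : 2 ≤ n) (P : Set (EuclideanSpace ℝ (Fin n)))
    (hbdd : Bornology.IsBounded P)
    (hpos : 0 < volume {x : EuclideanSpace ℝ (Fin n) |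
      ∃ e : EuclideanSpace ℝ (Fin n), ‖e‖ = 1 ∧
        ∃ c ∈ Set.Icc (0:ℝ) 1,
          0 < volume {s ∈ Set.Icc (0:ℝ) 1 | x + (s - c) • e ∈ P}}) :
    ∀ ε : ℝ, 0 < ε → ∃ cε : ℝ, 0 < cε ∧
      ∀ δ ∈ Set.Ioc (0:ℝ) 1,
        ENNReal.ofReal (cε * δ ^ (((n : ℝ) - 1)/2 + ε)) ≤
          volume (Metric.thickening δ P) := by
  obtain ⟨c, hc, hvol⟩ := stmt_12_general volume P hpos
  refine fun ε hε ↦ ⟨c, hc, fun δ hδ ↦ le_trans ?_ (hvol δ hδ)⟩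
  rw [finrank_euclideanSpace_fin]
  gcongr ENNReal.ofReal (c * ?_)
  exact Real.rpow_le_rpow_of_exponent_ge hδ.1 hδ.2 (by linarith)
end
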